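/- arXiv:1110.0868 — 2 statements merged into one kernel-verified Lean document; each statement's English description precedes it below -/
import Mathlib

section
/- Let n ≥ 3 be an odd integer and let y: ℤ → ℝ satisfy: y(i+2n) = y(i) for all i ∈ ℤ; y(i) = −1 for all i ∈ [2, 2n−2]_2; y(1)·y(2)⋯y(2n) = 1; y(0) ≠ −1; and y(i) ≠ 0 for all i ∈ ℤ. Then for all integers j and k with j+k odd and k ∈ {n, n+1}, the evaluation of F_{j,k} at y is nonzero. -/
/-!
In suitable coordinates `Q_k` consists of the triples `(u, v, m)` with `u, v ∈ [1, k-1]` and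
`max(0, u+v-k) < m ≤ min(u, v)`, and every covering relation of `P_k` joins `Q_k` to `Q_{k+1}`.
Fix the part `J` in `Q_k` of an order ideal. The parts in `Q_{k+1}` completing `J` are the sets
between a forced set and an allowed set, so summing over them gives a product (`freeFactor`), and
`aeval_F_eq` expresses `F_{j,k}` as a sum over `J`. The `J` with at least one completion are the
sets `{m > c(u, v)}` for the corner-sum functions `c` of `k × k` alternating sign matrices
(`exists_corner`), and the free elements of `Q_{k+1}` are the `1`-entries of the matrix; the one
at `(a, b)` contributes `1 + y(2(2a + b - C))`, where `2C = 3(k+1) - j`. Under the hypotheses this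
factor is `0` unless `2a + b ≡ C (mod n)`, in which case it is `1 + y(0) ≠ 0`. Hence only the
matrices all of whose `1`-entries lie in this residue class survive (`freeFactor_ne_zero_iff`).

* For `k = n` the class meets each row and column once, so exactly one permutation matrix
  survives (`eq_permSum`), and `F_{j,n}` is a single nonzero term.
* For `k = n + 1` only the rows and columns `1` and `n + 1` are affected by the wrap-around: a row
  whose admissible column is `1` also admits column `n + 1`. The surviving matrices are described
  by the row `a₀` that holds a `1` in column `n + 1` (`eq_bigSum`). If `(1, 1)` is not admissible,
  `a₀` is unique. If it is, `a₀ ∈ {1, n + 1}`; the two corner-sum functions differ by `1` at every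
  interior vertex, and periodicity together with `y(1)⋯y(2n) = 1` shows that the two terms have
  ratio `y(0)` (`termOf_ratio`), so their sum is a nonzero term times `1 + y(0) ≠ 0`.
-/

open MvPolynomial
open scoped Classical

noncomputable section

/-- The set `Q_k`: triples `(r,s,t)` with `|r|+|s| ≤ k-2`, `r+s ≡ k (mod 2)`,
`t ≡ 2|s|-k+2 (mod 4)` and `2|s|-k+2 ≤ t ≤ k-2-2|r|`. -/
def pentagramQ (k : ℤ) : Set (ℤ × ℤ × ℤ) :=
  {p | |p.1| + |p.2.1| ≤ k - 2 ∧ (2 : ℤ) ∣ (p.1 + p.2.1 - k) ∧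
    (4 : ℤ) ∣ (p.2.2 - (2 * |p.2.1| - k + 2)) ∧
    2 * |p.2.1| - k + 2 ≤ p.2.2 ∧ p.2.2 ≤ k - 2 - 2 * |p.1|}

/-- The set `P_k = Q_k ∪ Q_{k+1}`. -/
def pentagramP (k : ℤ) : Set (ℤ × ℤ × ℤ) := pentagramQ k ∪ pentagramQ (k + 1)

/-- The covering relation: `(r',s',t')` covers `(r,s,t)` iff `t' = t + 1` and
`|r'-r| + |s'-s| = 1`. -/
def pentagramCovers (x y : ℤ × ℤ × ℤ) : Prop :=
  y.2.2 = x.2.2 + 1 ∧ |y.1 - x.1| + |y.2.1 - x.2.1| = 1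

/-- The partial order on `P_k`: the reflexive-transitive closure of the covering
relation within `P_k`. -/
def pentagramLe (k : ℤ) : (ℤ × ℤ × ℤ) → (ℤ × ℤ × ℤ) → Prop :=
  Relation.ReflTransGen
    (fun x y => x ∈ pentagramP k ∧ y ∈ pentagramP k ∧ pentagramCovers x y)

/-- An order ideal of `P_k`: a downward-closed subset of `P_k`. -/
def IsPentagramOrderIdeal (k : ℤ) (I : Set (ℤ × ℤ × ℤ)) : Prop :=
  I ⊆ pentagramP k ∧ ∀ x y, y ∈ I → pentagramLe k x y → x ∈ I

/-- `P_k` realized as a `Finset` (it is contained in the displayed finite box). -/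
def pentagramPFinset (k : ℤ) : Finset (ℤ × ℤ × ℤ) :=
  ((Finset.Icc (-(k-1)) (k-1)) ×ˢ (Finset.Icc (-(k-1)) (k-1)) ×ˢ
    (Finset.Icc (-(k-1)) (k-1))).filter (fun p => p ∈ pentagramP k)

/-- The F-polynomial `F_{j,k} = Σ_{order ideals I of P_k} Π_{(r,s,t) ∈ I} y_{3r+s+j}`,
as an element of `ℤ[y_i : i ∈ ℤ] = MvPolynomial ℤ ℤ`. -/
def pentagramF (j k : ℤ) : MvPolynomial ℤ ℤ :=
  ∑ I ∈ (pentagramPFinset k).powerset.filter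
      (fun I : Finset (ℤ × ℤ × ℤ) => IsPentagramOrderIdeal k (↑I : Set (ℤ × ℤ × ℤ))),
    ∏ p ∈ I, X (3 * p.1 + p.2.1 + j)

/-- The ring endomorphism of `ℤ[y_i : i ∈ ℤ]` sending `y_i ↦ -1` for `i ∈ S`
and fixing the other variables; `substNeg S F` is `F|_S`. -/
def substNeg (S : Set ℤ) : MvPolynomial ℤ ℤ →+* MvPolynomial ℤ ℤ :=
  (MvPolynomial.aeval
    (fun i : ℤ => if i ∈ S then (-1 : MvPolynomial ℤ ℤ) else X i)).toRingHom

/-- The arithmetic progression `[a,b]_d = {a, a+d, a+2d, …, b}` (as a subset of `ℤ`). -/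
def AP (a b d : ℤ) : Set ℤ := {x | a ≤ x ∧ x ≤ b ∧ d ∣ (x - a)}

/-! ### Coordinates on `P_k` -/

/-- `Q_k` in the coordinates `(u, v, m)`, where `(u, v)` runs over the interior vertices of a
`k × k` grid and `m` over the values in `(max 0 (u+v-k), min u v]`. -/
def gridE (k : ℤ) : Finset (ℤ × ℤ × ℤ) :=
  ((Finset.Icc 1 (k-1)) ×ˢ (Finset.Icc 1 (k-1)) ×ˢ (Finset.Icc 1 (k-1))).filter
    (fun q => q.2.2 ≤ q.1 ∧ q.2.2 ≤ q.2.1 ∧ q.1 + q.2.1 - k < q.2.2)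

/-- The change of coordinates `(u, v, m) ↦ (r, s, t)` from `gridE k` onto `Q_k`. -/
def gridMap (k : ℤ) (q : ℤ × ℤ × ℤ) : ℤ × ℤ × ℤ :=
  (q.1 + q.2.1 - k, q.1 - q.2.1, 2 * (q.1 + q.2.1) - k + 2 - 4 * q.2.2)

lemma mem_gridE {k : ℤ} {q : ℤ × ℤ × ℤ} : q ∈ gridE k ↔
    1 ≤ q.1 ∧ q.1 ≤ k - 1 ∧ 1 ≤ q.2.1 ∧ q.2.1 ≤ k - 1 ∧ 1 ≤ q.2.2 ∧
      q.2.2 ≤ q.1 ∧ q.2.2 ≤ q.2.1 ∧ q.1 + q.2.1 - k < q.2.2 := by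
  simp only [gridE, Finset.mem_filter, Finset.mem_product, Finset.mem_Icc]
  constructor
  · rintro ⟨⟨⟨h1, h2⟩, ⟨h3, h4⟩, h5, h6⟩, h7, h8, h9⟩
    exact ⟨h1, h2, h3, h4, h5, h7, h8, h9⟩
  · rintro ⟨h1, h2, h3, h4, h5, h7, h8, h9⟩
    exact ⟨⟨⟨h1, h2⟩, ⟨h3, h4⟩, h5, by omega⟩, h7, h8, h9⟩

lemma gridMap_injective (k : ℤ) : Function.Injective (gridMap k) := by
  rintro ⟨u, v, m⟩ ⟨u', v', m'⟩ h
  simp only [gridMap, Prod.mk.injEq] at h ⊢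
  omega

lemma gridMap_mem {k : ℤ} {q : ℤ × ℤ × ℤ} (hq : q ∈ gridE k) :
    gridMap k q ∈ pentagramQ k := by
  obtain ⟨u, v, m⟩ := q
  rw [mem_gridE] at hq
  simp only at hq
  simp only [gridMap, pentagramQ, Set.mem_ofPred_eq]
  rcases abs_cases (u + v - k) with ⟨h1, _⟩ | ⟨h1, _⟩ <;>
  rcases abs_cases (u - v) with ⟨h2, _⟩ | ⟨h2, _⟩ <;> rw [h1, h2] <;> omega

lemma exists_of_mem_Q {k : ℤ} {p : ℤ × ℤ × ℤ} (hp : p ∈ pentagramQ k) :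
    ∃ q ∈ gridE k, gridMap k q = p := by
  obtain ⟨r, s, t⟩ := p
  simp only [pentagramQ, Set.mem_ofPred_eq] at hp
  obtain ⟨h1, ⟨a, h2⟩, ⟨b, h3⟩, h4, h5⟩ := hp
  have hr : r ≤ |r| ∧ -r ≤ |r| := ⟨le_abs_self r, neg_le_abs r⟩
  rcases abs_cases s with ⟨hs, _⟩ | ⟨hs, _⟩ <;> rw [hs] at h1 h3 h4
  · refine ⟨(a + k, a + k - s, a + k - s - b), ?_, ?_⟩
    · rw [mem_gridE]; simp only; omega
    · simp only [gridMap, Prod.mk.injEq]; omega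
  · refine ⟨(a + k, a + k - s, a + k - b), ?_, ?_⟩
    · rw [mem_gridE]; simp only; omega
    · simp only [gridMap, Prod.mk.injEq]; omega

/-- `x ∈ gridE k` is covered by `p ∈ gridE (k+1)`. -/
def isBelow (x p : ℤ × ℤ × ℤ) : Prop :=
  x.2.2 = p.2.2 ∧ ((x.1 = p.1 ∧ x.2.1 = p.2.1 - 1) ∨ (x.1 = p.1 - 1 ∧ x.2.1 = p.2.1))

/-- `x ∈ gridE k` covers `p ∈ gridE (k+1)`. -/
def isAbove (x p : ℤ × ℤ × ℤ) : Prop :=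
  (x.1 = p.1 ∧ x.2.1 = p.2.1 ∧ x.2.2 = p.2.2) ∨
    (x.1 = p.1 - 1 ∧ x.2.1 = p.2.1 - 1 ∧ x.2.2 = p.2.2 - 1)

lemma covers_below (k : ℤ) (x p : ℤ × ℤ × ℤ) :
    pentagramCovers (gridMap k x) (gridMap (k+1) p) ↔ isBelow x p := by
  obtain ⟨u, v, m⟩ := x
  obtain ⟨a, b, l⟩ := p
  simp only [pentagramCovers, gridMap, isBelow]
  rcases abs_cases (a + b - (k + 1) - (u + v - k)) with ⟨h1, _⟩ | ⟨h1, _⟩ <;>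
  rcases abs_cases (a - b - (u - v)) with ⟨h2, _⟩ | ⟨h2, _⟩ <;> rw [h1, h2] <;> omega

lemma covers_above (k : ℤ) (x p : ℤ × ℤ × ℤ) :
    pentagramCovers (gridMap (k+1) p) (gridMap k x) ↔ isAbove x p := by
  obtain ⟨u, v, m⟩ := x
  obtain ⟨a, b, l⟩ := p
  simp only [pentagramCovers, gridMap, isAbove]
  rcases abs_cases ((u + v - k) - (a + b - (k + 1))) with ⟨h1, _⟩ | ⟨h1, _⟩ <;>
  rcases abs_cases ((u - v) - (a - b)) with ⟨h2, _⟩ | ⟨h2, _⟩ <;> rw [h1, h2] <;> omega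

/-- Two elements of the same `Q_k` never cover each other, by parity of `r + s`. -/
lemma not_covers_same (k : ℤ) (x p : ℤ × ℤ × ℤ) :
    ¬ pentagramCovers (gridMap k x) (gridMap k p) := by
  obtain ⟨u, v, m⟩ := x
  obtain ⟨a, b, l⟩ := p
  simp only [pentagramCovers, gridMap]
  omega

lemma gridMap_ne (k : ℤ) (x p : ℤ × ℤ × ℤ) : gridMap k x ≠ gridMap (k+1) p := by
  obtain ⟨u, v, m⟩ := x
  obtain ⟨a, b, l⟩ := p
  simp only [gridMap, ne_eq, Prod.mk.injEq]
  omega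

lemma mem_PFinset {k : ℤ} {p : ℤ × ℤ × ℤ} : p ∈ pentagramPFinset k ↔ p ∈ pentagramP k := by
  simp only [pentagramPFinset, Finset.mem_filter, Finset.mem_product, Finset.mem_Icc,
    and_iff_right_iff_imp]
  intro hp
  obtain ⟨r, s, t⟩ := p
  have hr : r ≤ |r| ∧ -r ≤ |r| ∧ 0 ≤ |r| := ⟨le_abs_self r, neg_le_abs r, abs_nonneg r⟩
  have hs : s ≤ |s| ∧ -s ≤ |s| ∧ 0 ≤ |s| := ⟨le_abs_self s, neg_le_abs s, abs_nonneg s⟩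
  simp only [pentagramP, pentagramQ, Set.mem_union, Set.mem_ofPred_eq] at hp
  rcases hp with h | h <;> simp only <;> omega

/-- Being an order ideal only needs to be checked on covering pairs. -/
lemma isIdeal_iff (k : ℤ) (I : Set (ℤ × ℤ × ℤ)) : IsPentagramOrderIdeal k I ↔
    I ⊆ pentagramP k ∧ ∀ x ∈ pentagramP k, ∀ y ∈ pentagramP k, pentagramCovers x y →
      y ∈ I → x ∈ I := by
  refine and_congr_right fun _ => ⟨fun h x hx y hy hc hyI => ?_, fun h x y hyI hle => ?_⟩
  · exact h x y hyI (Relation.ReflTransGen.single ⟨hx, hy, hc⟩)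
  · induction hle using Relation.ReflTransGen.head_induction_on with
    | refl => exact hyI
    | head hab _ ih => exact h _ hab.1 _ hab.2.1 hab.2.2 ih

/-- Compatibility of `J ⊆ gridE k` with `T ⊆ gridE (k+1)`: together they form an order ideal. -/
def Compat (k : ℤ) (J T : Finset (ℤ × ℤ × ℤ)) : Prop :=
  (∀ x ∈ J, ∀ p ∈ gridE (k+1), isAbove x p → p ∈ T) ∧
    (∀ p ∈ T, ∀ x ∈ gridE k, isBelow x p → x ∈ J)

/-- The value at `y` of the variable attached to the element of `gridE k` above `(u, v)`. -/
def gridWt (y : ℤ → ℝ) (j k : ℤ) (q : ℤ × ℤ × ℤ) : ℝ := y (4 * q.1 + 2 * q.2.1 - 3 * k + j)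

lemma gridWt_eq (y : ℤ → ℝ) (j k : ℤ) (q : ℤ × ℤ × ℤ) :
    y (3 * (gridMap k q).1 + (gridMap k q).2.1 + j) = gridWt y j k q := by
  simp only [gridWt, gridMap]; congr 1; ring

lemma mem_P_iff {k : ℤ} {p : ℤ × ℤ × ℤ} : p ∈ pentagramP k ↔
    (∃ q ∈ gridE k, gridMap k q = p) ∨ ∃ q ∈ gridE (k+1), gridMap (k+1) q = p := by
  constructor
  · rintro (h | h)
    · exact Or.inl (exists_of_mem_Q h)
    · exact Or.inr (exists_of_mem_Q h)
  · rintro (⟨q, hq, rfl⟩ | ⟨q, hq, rfl⟩)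
    · exact Or.inl (gridMap_mem hq)
    · exact Or.inr (gridMap_mem hq)

/-- The subset of `P_k` with parts `J ⊆ Q_k` and `T ⊆ Q_{k+1}`. -/
def gluePair (k : ℤ) (c : Finset (ℤ × ℤ × ℤ) × Finset (ℤ × ℤ × ℤ)) : Finset (ℤ × ℤ × ℤ) :=
  c.1.image (gridMap k) ∪ c.2.image (gridMap (k+1))

lemma mem_gluePair_left {k : ℤ} {c : Finset (ℤ × ℤ × ℤ) × Finset (ℤ × ℤ × ℤ)}
    {q : ℤ × ℤ × ℤ} : gridMap k q ∈ gluePair k c ↔ q ∈ c.1 := by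
  simp only [gluePair, Finset.mem_union, Finset.mem_image]
  constructor
  · rintro (⟨a, ha, h⟩ | ⟨a, ha, h⟩)
    · exact gridMap_injective k h ▸ ha
    · exact absurd h.symm (gridMap_ne k _ _)
  · exact fun h => Or.inl ⟨q, h, rfl⟩

lemma mem_gluePair_right {k : ℤ} {c : Finset (ℤ × ℤ × ℤ) × Finset (ℤ × ℤ × ℤ)}
    {q : ℤ × ℤ × ℤ} : gridMap (k+1) q ∈ gluePair k c ↔ q ∈ c.2 := by
  simp only [gluePair, Finset.mem_union, Finset.mem_image]
  constructor
  · rintro (⟨a, ha, h⟩ | ⟨a, ha, h⟩)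
    · exact absurd h (gridMap_ne k _ _)
    · exact gridMap_injective (k+1) h ▸ ha
  · exact fun h => Or.inr ⟨q, h, rfl⟩

lemma isIdeal_gluePair {k : ℤ} {c : Finset (ℤ × ℤ × ℤ) × Finset (ℤ × ℤ × ℤ)}
    (h1 : c.1 ⊆ gridE k) (h2 : c.2 ⊆ gridE (k+1)) :
    IsPentagramOrderIdeal k (↑(gluePair k c) : Set (ℤ × ℤ × ℤ)) ↔ Compat k c.1 c.2 := by
  rw [isIdeal_iff]
  constructor
  · rintro ⟨-, h⟩
    refine ⟨fun x hx p hp hxp => ?_, fun p hp x hx hxp => ?_⟩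
    · exact mem_gluePair_right.1 (h _ (mem_P_iff.2 (Or.inr ⟨p, hp, rfl⟩)) _
        (mem_P_iff.2 (Or.inl ⟨x, h1 hx, rfl⟩)) ((covers_above k x p).2 hxp)
        (mem_gluePair_left.2 hx))
    · exact mem_gluePair_left.1 (h _ (mem_P_iff.2 (Or.inl ⟨x, hx, rfl⟩)) _
        (mem_P_iff.2 (Or.inr ⟨p, h2 hp, rfl⟩)) ((covers_below k x p).2 hxp)
        (mem_gluePair_right.2 hp))
  · rintro ⟨ha, hb⟩
    constructor
    · intro z hz
      rw [mem_P_iff]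
      simp only [gluePair, Finset.coe_union, Finset.coe_image, Set.mem_union, Set.mem_image,
        Finset.mem_coe] at hz
      rcases hz with ⟨q, hq, e⟩ | ⟨q, hq, e⟩
      · exact Or.inl ⟨q, h1 hq, e⟩
      · exact Or.inr ⟨q, h2 hq, e⟩
    · intro z hz z' hz' hc hI
      rw [mem_P_iff] at hz hz'
      rcases hz with ⟨q, hq, rfl⟩ | ⟨q, hq, rfl⟩ <;> rcases hz' with ⟨q', hq', rfl⟩ | ⟨q', hq', rfl⟩
      · exact absurd hc (not_covers_same _ _ _)
      · exact mem_gluePair_left.2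
          (hb q' (mem_gluePair_right.1 hI) q hq ((covers_below k q q').1 hc))
      · exact mem_gluePair_right.2
          (ha q' (mem_gluePair_left.1 hI) q hq ((covers_above k q' q).1 hc))
      · exact absurd hc (not_covers_same _ _ _)

/-- Order ideals of `P_k` correspond to compatible pairs of subsets of `gridE k` and
`gridE (k+1)`. -/
lemma aeval_F (y : ℤ → ℝ) (j k : ℤ) :
    MvPolynomial.aeval y (pentagramF j k) =
      ∑ J ∈ (gridE k).powerset, (∏ q ∈ J, gridWt y j k q) *
        ∑ T ∈ (gridE (k+1)).powerset.filter (fun T => Compat k J T),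
          ∏ q ∈ T, gridWt y j (k+1) q := by
  have h : MvPolynomial.aeval y (pentagramF j k) =
      ∑ c ∈ ((gridE k).powerset ×ˢ (gridE (k+1)).powerset).filter (fun c => Compat k c.1 c.2),
        (∏ q ∈ c.1, gridWt y j k q) * ∏ q ∈ c.2, gridWt y j (k+1) q := by
    rw [pentagramF, map_sum]
    symm
    refine Finset.sum_nbij (gluePair k) ?_ ?_ ?_ ?_
    · rintro c hc
      simp only [Finset.mem_filter, Finset.mem_product, Finset.mem_powerset] at hc ⊢
      have hI := (isIdeal_gluePair hc.1.1 hc.1.2).2 hc.2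
      refine ⟨fun z hz => mem_PFinset.2 (hI.1 hz), hI⟩
    · rintro c hc c' hc' h
      ext q
      · rw [← mem_gluePair_left (k := k), ← mem_gluePair_left (k := k)]; simp only [h]
      · rw [← mem_gluePair_right (k := k), ← mem_gluePair_right (k := k)]; simp only [h]
    · intro I hI
      simp only [Finset.coe_filter, Set.mem_ofPred_eq, Finset.mem_powerset] at hI
      have hs1 : (gridE k).filter (fun q => gridMap k q ∈ I) ⊆ gridE k := Finset.filter_subset _ _
      have hs2 : (gridE (k+1)).filter (fun q => gridMap (k+1) q ∈ I) ⊆ gridE (k+1) :=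
        Finset.filter_subset _ _
      have hg : gluePair k ((gridE k).filter (fun q => gridMap k q ∈ I),
          (gridE (k+1)).filter (fun q => gridMap (k+1) q ∈ I)) = I := by
        ext z
        simp only [gluePair, Finset.mem_union, Finset.mem_image, Finset.mem_filter]
        constructor
        · rintro (⟨q, hq, rfl⟩ | ⟨q, hq, rfl⟩)
          · exact hq.2
          · exact hq.2
        · intro hz
          rcases mem_P_iff.1 (hI.2.1 hz) with ⟨q, hq, rfl⟩ | ⟨q, hq, rfl⟩
          · exact Or.inl ⟨q, ⟨hq, hz⟩, rfl⟩
          · exact Or.inr ⟨q, ⟨hq, hz⟩, rfl⟩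
      refine ⟨_, ?_, hg⟩
      simp only [Finset.coe_filter, Finset.mem_product, Finset.mem_powerset, Set.mem_ofPred_eq]
      refine ⟨⟨hs1, hs2⟩, ?_⟩
      have := hI.2
      rw [← hg] at this
      exact (isIdeal_gluePair hs1 hs2).1 this
    · intro c _
      rw [map_prod, gluePair, Finset.prod_union, Finset.prod_image, Finset.prod_image]
      · simp only [MvPolynomial.aeval_X, gridWt_eq]
      · exact fun _ _ _ _ h => gridMap_injective _ h
      · exact fun _ _ _ _ h => gridMap_injective _ h
      · rw [Finset.disjoint_left]
        simp only [Finset.mem_image]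
        rintro _ ⟨q, _, rfl⟩ ⟨q', _, h⟩
        exact gridMap_ne _ _ _ h.symm
  rw [h, Finset.sum_filter, Finset.sum_product]
  refine Finset.sum_congr rfl fun J _ => ?_
  rw [Finset.mul_sum, Finset.sum_filter]


/-! ### Summing out `Q_{k+1}` -/

/-- The elements of `Q_{k+1}` forced into an order ideal whose part in `Q_k` is `J`. -/
def forcedSet (k : ℤ) (J : Finset (ℤ × ℤ × ℤ)) : Finset (ℤ × ℤ × ℤ) :=
  (gridE (k+1)).filter (fun p => ∃ x ∈ J, isAbove x p)

/-- The elements of `Q_{k+1}` allowed in an order ideal whose part in `Q_k` is `J`. -/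
def allowedSet (k : ℤ) (J : Finset (ℤ × ℤ × ℤ)) : Finset (ℤ × ℤ × ℤ) :=
  (gridE (k+1)).filter (fun p => ∀ x ∈ gridE k, isBelow x p → x ∈ J)

lemma filter_compat (k : ℤ) (J : Finset (ℤ × ℤ × ℤ)) :
    (gridE (k+1)).powerset.filter (fun T => Compat k J T) =
      Finset.Icc (forcedSet k J) (allowedSet k J) := by
  ext T
  simp only [Finset.mem_filter, Finset.mem_powerset, Finset.mem_Icc]
  constructor
  · rintro ⟨hT, h1, h2⟩
    refine ⟨fun p hp => ?_, fun p hp => ?_⟩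
    · obtain ⟨hp, x, hx, hxp⟩ := Finset.mem_filter.1 hp
      exact h1 x hx p hp hxp
    · exact Finset.mem_filter.2 ⟨hT hp, h2 p hp⟩
  · rintro ⟨h1, h2⟩
    refine ⟨fun p hp => (Finset.mem_filter.1 (h2 hp)).1, fun x hx p hp hxp => ?_, fun p hp => ?_⟩
    · exact h1 (Finset.mem_filter.2 ⟨hp, x, hx, hxp⟩)
    · exact (Finset.mem_filter.1 (h2 hp)).2

/-- The total weight of the order ideals of `P_k` whose part in `Q_k` is `J`, divided by the
weight of `J`: forced elements contribute `w`, free ones `1 + w`. -/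
def freeFactor (y : ℤ → ℝ) (j k : ℤ) (J : Finset (ℤ × ℤ × ℤ)) : ℝ :=
  if forcedSet k J ⊆ allowedSet k J then
    (∏ q ∈ forcedSet k J, gridWt y j (k+1) q) *
      ∏ q ∈ allowedSet k J \ forcedSet k J, (1 + gridWt y j (k+1) q)
  else 0

lemma aeval_F_eq (y : ℤ → ℝ) (j k : ℤ) :
    MvPolynomial.aeval y (pentagramF j k) =
      ∑ J ∈ (gridE k).powerset, (∏ q ∈ J, gridWt y j k q) * freeFactor y j k J := by
  rw [aeval_F]
  refine Finset.sum_congr rfl fun J _ => ?_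
  rw [filter_compat, freeFactor]
  congr 1
  split_ifs with h
  · rw [Finset.Icc_eq_image_powerset h, Finset.sum_image, Finset.prod_one_add, Finset.mul_sum]
    · refine Finset.sum_congr rfl fun T hT => ?_
      rw [Finset.prod_union]
      exact Finset.disjoint_of_subset_right (Finset.mem_powerset.1 hT) Finset.disjoint_sdiff
    · intro T hT T' hT' hTT
      have hd : ∀ T'' ∈ (allowedSet k J \ forcedSet k J).powerset,
          (forcedSet k J ∪ T'') \ forcedSet k J = T'' := by
        intro T'' h''
        rw [Finset.union_sdiff_cancel_left]
        exact Finset.disjoint_of_subset_right (Finset.mem_powerset.1 h'') Finset.disjoint_sdiff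
      rw [← hd T hT, ← hd T' hT']
      simp only at hTT
      rw [hTT]
  · rw [Finset.Icc_eq_empty h, Finset.sum_empty]

/-! ### Corner-sum functions -/

/-- `c` is the corner-sum function of a `k × k` alternating sign matrix. -/
structure IsCornerSum (k : ℤ) (c : ℤ → ℤ → ℤ) : Prop where
  zero_left : ∀ v, 0 ≤ v → v ≤ k → c 0 v = 0
  zero_right : ∀ u, 0 ≤ u → u ≤ k → c u 0 = 0
  top_left : ∀ v, 0 ≤ v → v ≤ k → c k v = v
  top_right : ∀ u, 0 ≤ u → u ≤ k → c u k = u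
  row : ∀ u v, 1 ≤ u → u ≤ k → 0 ≤ v → v ≤ k → c (u-1) v ≤ c u v ∧ c u v ≤ c (u-1) v + 1
  col : ∀ u v, 0 ≤ u → u ≤ k → 1 ≤ v → v ≤ k → c u (v-1) ≤ c u v ∧ c u v ≤ c u (v-1) + 1

lemma IsCornerSum.left_bounds {k : ℤ} {c : ℤ → ℤ → ℤ} (hc : IsCornerSum k c) (v : ℤ) (hv : 0 ≤ v)
    (hvk : v ≤ k) (u : ℤ) (hu : 0 ≤ u) : u ≤ k → 0 ≤ c u v ∧ c u v ≤ u := by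
  induction u, hu using Int.leInduction with
  | base => intro _; rw [hc.zero_left v hv hvk]; omega
  | succ u hu ih =>
    intro h
    have h1 := ih (by omega)
    have h2 := hc.row (u+1) v (by omega) h hv hvk
    rw [add_sub_cancel_right] at h2
    omega

lemma IsCornerSum.right_bound {k : ℤ} {c : ℤ → ℤ → ℤ} (hc : IsCornerSum k c) (u : ℤ) (hu : 0 ≤ u)
    (huk : u ≤ k) (v : ℤ) (hv : 0 ≤ v) : v ≤ k → c u v ≤ v := by
  induction v, hv using Int.leInduction with
  | base => intro _; rw [hc.zero_right u hu huk]
  | succ v hv ih =>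
    intro h
    have h1 := ih (by omega)
    have h2 := hc.col u (v+1) hu huk (by omega) h
    rw [add_sub_cancel_right] at h2
    omega

lemma IsCornerSum.lower_bound {k : ℤ} {c : ℤ → ℤ → ℤ} (hc : IsCornerSum k c) (v : ℤ) (hv : 0 ≤ v)
    (hvk : v ≤ k) (u : ℤ) (huk : u ≤ k) : 0 ≤ u → u + v - k ≤ c u v := by
  induction u, huk using Int.leInductionDown with
  | base => intro _; rw [hc.top_left v hv hvk]; omega
  | pred u hu ih =>
    intro h
    have h1 := ih (by omega)
    have h2 := hc.row u v (by omega) hu hv hvk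
    omega

lemma IsCornerSum.bounds {k : ℤ} {c : ℤ → ℤ → ℤ} (hc : IsCornerSum k c) {u v : ℤ} (hu : 0 ≤ u)
    (huk : u ≤ k) (hv : 0 ≤ v) (hvk : v ≤ k) :
    0 ≤ c u v ∧ c u v ≤ u ∧ c u v ≤ v ∧ u + v - k ≤ c u v :=
  ⟨(hc.left_bounds v hv hvk u hu huk).1, (hc.left_bounds v hv hvk u hu huk).2,
    hc.right_bound u hu huk v hv hvk, hc.lower_bound v hv hvk u huk hu⟩

/-- The ideal of `Q_k` attached to a corner-sum function. -/
def cornerSet (k : ℤ) (c : ℤ → ℤ → ℤ) : Finset (ℤ × ℤ × ℤ) :=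
  (gridE k).filter (fun q => c q.1 q.2.1 < q.2.2)

/-- The elements above `(a, b)` are forced exactly when their level exceeds this number. -/
def forcedLevel (c : ℤ → ℤ → ℤ) (a b : ℤ) : ℤ := min (c a b) (c (a-1) (b-1) + 1)

/-- The elements above `(a, b)` are allowed exactly when their level exceeds this number. -/
def allowedLevel (c : ℤ → ℤ → ℤ) (a b : ℤ) : ℤ := max (c a (b-1)) (c (a-1) b)

lemma allowedSet_cornerSet {k : ℤ} {c : ℤ → ℤ → ℤ} (hc : IsCornerSum k c) :
    allowedSet k (cornerSet k c) =
      (gridE (k+1)).filter (fun p => allowedLevel c p.1 p.2.1 < p.2.2) := by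
  refine Finset.filter_congr ?_
  rintro ⟨a, b, m⟩ hp
  rw [mem_gridE] at hp
  simp only [allowedLevel, max_lt_iff] at hp ⊢
  constructor
  · intro h
    constructor
    · by_cases hx : (a, b-1, m) ∈ gridE k
      · exact (Finset.mem_filter.1 (h _ hx ⟨rfl, Or.inl ⟨rfl, rfl⟩⟩)).2
      · rw [mem_gridE] at hx
        simp only at hx
        have := hc.bounds (u := a) (v := b - 1) (by omega) (by omega) (by omega) (by omega)
        by_cases hak : a = k
        · have := hc.top_left (b-1) (by omega) (by omega)
          subst hak
          omega
        · omega
    · by_cases hx : (a-1, b, m) ∈ gridE k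
      · exact (Finset.mem_filter.1 (h _ hx ⟨rfl, Or.inr ⟨rfl, rfl⟩⟩)).2
      · rw [mem_gridE] at hx
        simp only at hx
        have := hc.bounds (u := a-1) (v := b) (by omega) (by omega) (by omega) (by omega)
        by_cases hak : b = k
        · have := hc.top_right (a-1) (by omega) (by omega)
          subst hak
          omega
        · omega
  · rintro ⟨h1, h2⟩ ⟨u, v, l⟩ hx ⟨e, ⟨e1, e2⟩ | ⟨e1, e2⟩⟩ <;> simp only at e e1 e2 <;>
      subst e e1 e2 <;> exact Finset.mem_filter.2 ⟨hx, by assumption⟩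

lemma forcedSet_cornerSet {k : ℤ} {c : ℤ → ℤ → ℤ} (hc : IsCornerSum k c) :
    forcedSet k (cornerSet k c) =
      (gridE (k+1)).filter (fun p => forcedLevel c p.1 p.2.1 < p.2.2) := by
  refine Finset.filter_congr ?_
  rintro ⟨a, b, m⟩ hp
  rw [mem_gridE] at hp
  simp only [forcedLevel, min_lt_iff] at hp ⊢
  constructor
  · rintro ⟨⟨u, v, l⟩, hx, ⟨e, e1, e2⟩ | ⟨e, e1, e2⟩⟩ <;> simp only at e e1 e2 <;>
      subst e e1 e2 <;> have h := (Finset.mem_filter.1 hx).2 <;> simp only at h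
    · exact Or.inl h
    · right; omega
  · rintro (h | h)
    · refine ⟨(a, b, m), Finset.mem_filter.2 ⟨?_, h⟩, Or.inl ⟨rfl, rfl, rfl⟩⟩
      have := hc.bounds (u := a) (v := b) (by omega) (by omega) (by omega) (by omega)
      rw [mem_gridE]
      simp only
      omega
    · refine ⟨(a-1, b-1, m-1), Finset.mem_filter.2 ⟨?_, by simp only; omega⟩,
        Or.inr ⟨rfl, rfl, rfl⟩⟩
      have := hc.bounds (u := a-1) (v := b-1) (by omega) (by omega) (by omega) (by omega)
      rw [mem_gridE]
      simp only
      omega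

lemma IsCornerSum.level_le {k : ℤ} {c : ℤ → ℤ → ℤ} (hc : IsCornerSum k c) {a b : ℤ}
    (ha : 1 ≤ a) (hak : a ≤ k) (hb : 1 ≤ b) (hbk : b ≤ k) :
    allowedLevel c a b ≤ forcedLevel c a b := by
  have h1 := hc.row a b ha hak (by omega) hbk
  have h2 := hc.row a (b-1) ha hak (by omega) (by omega)
  have h3 := hc.col a b (by omega) hak hb hbk
  have h4 := hc.col (a-1) b (by omega) (by omega) hb hbk
  simp only [allowedLevel, forcedLevel]
  omega

lemma forced_subset_allowed {k : ℤ} {c : ℤ → ℤ → ℤ} (hc : IsCornerSum k c) :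
    forcedSet k (cornerSet k c) ⊆ allowedSet k (cornerSet k c) := by
  rw [forcedSet_cornerSet hc, allowedSet_cornerSet hc]
  rintro p hp
  obtain ⟨hp, h⟩ := Finset.mem_filter.1 hp
  refine Finset.mem_filter.2 ⟨hp, ?_⟩
  rw [mem_gridE] at hp
  have := hc.level_le (a := p.1) (b := p.2.1) (by omega) (by omega) (by omega) (by omega)
  omega

lemma exists_threshold (p : ℤ → Prop) (N : ℕ)
    (hp : ∀ m : ℤ, 1 ≤ m → m + 1 ≤ N → p m → p (m+1)) :
    ∃ c : ℤ, 0 ≤ c ∧ c ≤ N ∧ ∀ m : ℤ, 1 ≤ m → m ≤ N → (p m ↔ c < m) := by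
  induction N with
  | zero => exact ⟨0, le_rfl, le_rfl, fun m h1 h2 => by simp only [Nat.cast_zero] at h2; omega⟩
  | succ N ih =>
    push_cast at hp ⊢
    obtain ⟨c, h0, hN, h⟩ := ih (fun m h1 h2 => hp m h1 (by omega))
    by_cases hq : p (N + 1)
    · refine ⟨c, h0, by omega, fun m h1 h2 => ?_⟩
      rcases eq_or_lt_of_le h2 with rfl | h3
      · exact iff_of_true hq (by omega)
      · exact h m h1 (by omega)
    · refine ⟨N + 1, by omega, le_rfl, fun m h1 h2 => iff_of_false ?_ (by omega)⟩
      rcases eq_or_lt_of_le h2 with rfl | h3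
      · exact hq
      · intro hm
        have hcm := (h m h1 (by omega)).1 hm
        exact hq (hp N (by omega) le_rfl ((h N (by omega) le_rfl).2 (by omega)))

/-- Every `J ⊆ Q_k` that extends to an order ideal of `P_k` comes from a corner-sum function. -/
lemma exists_corner {k : ℤ} {J : Finset (ℤ × ℤ × ℤ)} (hJ : J ⊆ gridE k)
    (hFA : forcedSet k J ⊆ allowedSet k J) : ∃ c, IsCornerSum k c ∧ J = cornerSet k c := by
  have key : ∀ x ∈ J, ∀ p ∈ gridE (k+1), isAbove x p → ∀ z ∈ gridE k, isBelow z p → z ∈ J :=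
    fun x hx p hp hxp => (Finset.mem_filter.1 (hFA (Finset.mem_filter.2 ⟨hp, x, hx, hxp⟩))).2
  have dl : ∀ u v m, (u, v, m) ∈ J → (u-1, v, m) ∈ gridE k → (u-1, v, m) ∈ J := by
    intro u v m h h'
    refine key _ h (u, v, m) ?_ (Or.inl ⟨rfl, rfl, rfl⟩) _ h' ⟨rfl, Or.inr ⟨rfl, rfl⟩⟩
    have := hJ h
    rw [mem_gridE] at this ⊢
    simp only at this ⊢
    omega
  have dr : ∀ u v m, (u, v, m) ∈ J → (u, v-1, m) ∈ gridE k → (u, v-1, m) ∈ J := by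
    intro u v m h h'
    refine key _ h (u, v, m) ?_ (Or.inl ⟨rfl, rfl, rfl⟩) _ h' ⟨rfl, Or.inl ⟨rfl, rfl⟩⟩
    have := hJ h
    rw [mem_gridE] at this ⊢
    simp only at this ⊢
    omega
  have ul : ∀ u v m, (u, v, m) ∈ J → (u+1, v, m+1) ∈ gridE k → (u+1, v, m+1) ∈ J := by
    intro u v m h h'
    refine key _ h (u+1, v+1, m+1) ?_ (Or.inr ⟨?_, ?_, ?_⟩) _ h' ⟨rfl, Or.inl ⟨rfl, ?_⟩⟩
    · have := hJ h
      rw [mem_gridE] at this ⊢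
      simp only at this ⊢
      omega
    all_goals simp
  have ur : ∀ u v m, (u, v, m) ∈ J → (u, v+1, m+1) ∈ gridE k → (u, v+1, m+1) ∈ J := by
    intro u v m h h'
    refine key _ h (u+1, v+1, m+1) ?_ (Or.inr ⟨?_, ?_, ?_⟩) _ h' ⟨rfl, Or.inr ⟨?_, rfl⟩⟩
    · have := hJ h
      rw [mem_gridE] at this ⊢
      simp only at this ⊢
      omega
    all_goals simp
  have up : ∀ u v m, (u, v, m) ∈ J → m + 1 ≤ u → m + 1 ≤ v → (u, v, m+1) ∈ J := by
    intro u v m h h1 h2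
    have h3 := hJ h
    rw [mem_gridE] at h3
    simp only at h3
    have h4 : (u+1, v, m+1) ∈ J := by
      refine ul u v m h ?_
      rw [mem_gridE]
      simp only
      omega
    have h5 := dl _ _ _ h4
    rw [add_sub_cancel_right] at h5
    refine h5 ?_
    rw [mem_gridE]
    simp only
    omega
  have ex : ∀ u v : ℤ, ∃ c : ℤ, 0 ≤ u → 0 ≤ v → 0 ≤ c ∧ c ≤ min u v ∧
      ∀ m : ℤ, 1 ≤ m → m ≤ min u v → ((u, v, m) ∈ J ↔ c < m) := by
    intro u v
    by_cases h : 0 ≤ u ∧ 0 ≤ v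
    · obtain ⟨c, hc⟩ := exists_threshold (fun m => (u, v, m) ∈ J) (min u v).toNat
        (fun m h1 h2 hm => up u v m hm (by omega) (by omega))
      rw [Int.toNat_of_nonneg (by omega)] at hc
      exact ⟨c, fun _ _ => hc⟩
    · exact ⟨0, fun h1 h2 => absurd ⟨h1, h2⟩ h⟩
  choose c hc using ex
  refine ⟨c, ⟨?_, ?_, ?_, ?_, ?_, ?_⟩, ?_⟩
  · intro v hv _
    have := hc 0 v le_rfl hv
    omega
  · intro u hu _
    have := hc u 0 hu le_rfl
    omega
  · intro v hv hvk
    obtain ⟨h1, h2, h3⟩ := hc k v (by omega) hv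
    by_contra hne
    have := hJ ((h3 v (by omega) (by omega)).2 (by omega))
    rw [mem_gridE] at this
    simp only at this
    omega
  · intro u hu huk
    obtain ⟨h1, h2, h3⟩ := hc u k hu (by omega)
    by_contra hne
    have := hJ ((h3 u (by omega) (by omega)).2 (by omega))
    rw [mem_gridE] at this
    simp only at this
    omega
  · intro u v hu huk hv hvk
    obtain ⟨h1, h2, h3⟩ := hc u v (by omega) hv
    obtain ⟨k1, k2, k3⟩ := hc (u-1) v (by omega) hv
    constructor
    · by_contra hlt
      have hm := (h3 (c u v + 1) (by omega) (by omega)).2 (by omega)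
      have hg := hJ hm
      rw [mem_gridE] at hg
      simp only at hg
      have := (k3 (c u v + 1) (by omega) (by omega)).1 (dl _ _ _ hm (by
        rw [mem_gridE]; simp only; omega))
      omega
    · by_contra hlt
      have hm := (k3 (c (u-1) v + 1) (by omega) (by omega)).2 (by omega)
      have hg := hJ hm
      rw [mem_gridE] at hg
      simp only at hg
      have h5 := ul _ _ _ hm
      rw [sub_add_cancel] at h5
      have := (h3 (c (u-1) v + 1 + 1) (by omega) (by omega)).1 (h5 (by
        rw [mem_gridE]; simp only; omega))
      omega
  · intro u v hu huk hv hvk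
    obtain ⟨h1, h2, h3⟩ := hc u v hu (by omega)
    obtain ⟨k1, k2, k3⟩ := hc u (v-1) hu (by omega)
    constructor
    · by_contra hlt
      have hm := (h3 (c u v + 1) (by omega) (by omega)).2 (by omega)
      have hg := hJ hm
      rw [mem_gridE] at hg
      simp only at hg
      have := (k3 (c u v + 1) (by omega) (by omega)).1 (dr _ _ _ hm (by
        rw [mem_gridE]; simp only; omega))
      omega
    · by_contra hlt
      have hm := (k3 (c u (v-1) + 1) (by omega) (by omega)).2 (by omega)
      have hg := hJ hm
      rw [mem_gridE] at hg
      simp only at hg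
      have h5 := ur _ _ _ hm
      rw [sub_add_cancel] at h5
      have := (h3 (c u (v-1) + 1 + 1) (by omega) (by omega)).1 (h5 (by
        rw [mem_gridE]; simp only; omega))
      omega
  · ext ⟨u, v, m⟩
    simp only [cornerSet, Finset.mem_filter]
    constructor
    · intro h
      have hg := hJ h
      refine ⟨hg, ?_⟩
      rw [mem_gridE] at hg
      simp only at hg
      exact ((hc u v (by omega) (by omega)).2.2 m (by omega) (by omega)).1 h
    · rintro ⟨hg, h⟩
      rw [mem_gridE] at hg
      simp only at hg
      exact ((hc u v (by omega) (by omega)).2.2 m (by omega) (by omega)).2 h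

lemma cornerSet_congr {k : ℤ} {c c' : ℤ → ℤ → ℤ}
    (h : ∀ u v, 0 ≤ u → u ≤ k → 0 ≤ v → v ≤ k → c u v = c' u v) :
    cornerSet k c = cornerSet k c' := by
  refine Finset.filter_congr ?_
  intro q hq
  rw [mem_gridE] at hq
  rw [h q.1 q.2.1 (by omega) (by omega) (by omega) (by omega)]


/-! ### The free positions when the even-indexed variables are `-1` -/

/-- All `1`-entries of the alternating sign matrix with corner sums `c` lie at positions
`(a, b)` with `2a + b ≡ C (mod n)`. -/
def IsGood (n C k : ℤ) (c : ℤ → ℤ → ℤ) : Prop :=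
  ∀ a b, 1 ≤ a → a ≤ k → 1 ≤ b → b ≤ k → c a b = c (a-1) b + 1 → c a (b-1) = c (a-1) (b-1) →
    n ∣ 2 * a + b - C

/-- The free elements of `Q_{k+1}` sit exactly at the `1`-entries, so the factor is nonzero if
and only if none of the `1`-entries sits at a position of weight `-1`. -/
lemma freeFactor_ne_zero_iff {y : ℤ → ℝ} {j k n C : ℤ} {c : ℤ → ℤ → ℤ} (hc : IsCornerSum k c)
    (hnz : ∀ i, y i ≠ 0)
    (hw : ∀ a b, y (4 * a + 2 * b - 3 * (k+1) + j) = -1 ↔ ¬ n ∣ 2 * a + b - C) :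
    freeFactor y j k (cornerSet k c) ≠ 0 ↔ IsGood n C k c := by
  have hforced : ∏ q ∈ forcedSet k (cornerSet k c), gridWt y j (k+1) q ≠ 0 :=
    Finset.prod_ne_zero_iff.2 fun q _ => hnz _
  rw [freeFactor, if_pos (forced_subset_allowed hc), mul_ne_zero_iff, and_iff_right hforced,
    Finset.prod_ne_zero_iff,
    forcedSet_cornerSet hc, allowedSet_cornerSet hc]
  constructor
  · intro h a b ha hak hb hbk e1 e2
    have b1 := hc.row a (b-1) ha hak (by omega) (by omega)
    have b2 := hc.col (a-1) b (by omega) (by omega) hb hbk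
    have b3 := hc.col a b (by omega) (by omega) hb hbk
    have b4 := hc.bounds (u := a-1) (v := b-1) (by omega) (by omega) (by omega) (by omega)
    have b5 := hc.bounds (u := a) (v := b-1) (by omega) (by omega) (by omega) (by omega)
    have h1 := h (a, b, c a b) (by
      simp only [Finset.mem_sdiff, Finset.mem_filter, mem_gridE]
      simp only [allowedLevel, forcedLevel]
      omega)
    by_contra hn
    apply h1
    simp only [gridWt]
    rw [(hw a b).2 hn]
    norm_num
  · rintro h ⟨a, b, m⟩ hp
    simp only [Finset.mem_sdiff, Finset.mem_filter, mem_gridE] at hp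
    simp only [allowedLevel, forcedLevel] at hp
    intro h0
    simp only [gridWt] at h0
    have b1 := hc.row a (b-1) (by omega) (by omega) (by omega) (by omega)
    have b2 := hc.col (a-1) b (by omega) (by omega) (by omega) (by omega)
    have b3 := hc.col a b (by omega) (by omega) (by omega) (by omega)
    exact (hw a b).1 (by linarith)
      (h a b (by omega) (by omega) (by omega) (by omega) (by omega) (by omega))

/-- A row with a single admissible position `β` has a single nonzero entry, a `1` at `β`. -/
lemma row_determined {n C k a β : ℤ} {c : ℤ → ℤ → ℤ} (hc : IsCornerSum k c)
    (hg : IsGood n C k c) (ha : 1 ≤ a) (hak : a ≤ k) (hβ : 1 ≤ β)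
    (hu : ∀ b, 1 ≤ b → b ≤ k → n ∣ 2 * a + b - C → b = β) (b : ℤ) (hb : 0 ≤ b) (hbk : b ≤ k) :
    c a b = c (a-1) b + if β ≤ b then 1 else 0 := by
  have jump : ∀ b, 1 ≤ b → b ≤ k → c a b = c (a-1) b + 1 → c a (b-1) = c (a-1) (b-1) → b = β :=
    fun b h1 h2 h3 h4 => hu b h1 h2 (hg a b ha hak h1 h2 h3 h4)
  split_ifs with h
  · have : ∀ b, b ≤ k → β ≤ b → c a b = c (a-1) b + 1 := by
      intro b hbk
      induction b, hbk using Int.leInductionDown with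
      | base =>
        intro _
        rw [hc.top_right a (by omega) (by omega), hc.top_right (a-1) (by omega) (by omega)]
        omega
      | pred b hbk ih =>
        intro hb
        have h1 := ih (by omega)
        have h2 := hc.row a (b-1) ha hak (by omega) (by omega)
        by_contra h3
        have := jump b (by omega) hbk h1 (by omega)
        omega
    exact this b hbk h
  · have : ∀ b, 0 ≤ b → b ≤ k → b < β → c a b = c (a-1) b := by
      intro b hb
      induction b, hb using Int.leInduction with
      | base =>
        intro _ _
        rw [hc.zero_right a (by omega) (by omega), hc.zero_right (a-1) (by omega) (by omega)]
      | succ b hb ih =>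
        intro hbk hβ'
        have h1 := ih (by omega) (by omega)
        have h2 := hc.row a (b+1) ha hak (by omega) (by omega)
        by_contra h3
        have := jump (b+1) (by omega) hbk (by omega) (by rw [add_sub_cancel_right]; exact h1)
        omega
    rw [this b hb hbk (by omega), add_zero]

/-- The column `b ∈ [1, n]` with `2a + b ≡ C (mod n)`. -/
def colOf (n C a : ℤ) : ℤ := (C - 2 * a - 1) % n + 1

/-- For odd `n`, the row `a ∈ [1, n]` with `2a + b ≡ C (mod n)`. -/
def rowOf (n C b : ℤ) : ℤ := ((n + 1) / 2 * (C - b) - 1) % n + 1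

lemma eq_of_dvd_sub {n a b : ℤ} (ha : 1 ≤ a) (han : a ≤ n) (hb : 1 ≤ b) (hbn : b ≤ n)
    (h : n ∣ a - b) : a = b := by
  have := Int.eq_zero_of_abs_lt_dvd h (by rw [abs_lt]; omega)
  omega

lemma dvd_of_dvd_of_eq {n x z : ℤ} (h : n ∣ x) (e : z = x) : n ∣ z := e ▸ h

lemma emod_dvd (n x : ℤ) : n ∣ x - x % n := ⟨x / n, by have := Int.emod_add_mul_ediv x n; linarith⟩

lemma colOf_spec {n : ℤ} (hn : 0 < n) (C a : ℤ) :
    1 ≤ colOf n C a ∧ colOf n C a ≤ n ∧ n ∣ 2 * a + colOf n C a - C := by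
  have h1 := Int.emod_nonneg (C - 2 * a - 1) hn.ne'
  have h2 := Int.emod_lt_of_pos (C - 2 * a - 1) hn
  refine ⟨by unfold colOf; omega, by unfold colOf; omega, ?_⟩
  rw [← dvd_neg]
  exact dvd_of_dvd_of_eq (emod_dvd n (C - 2 * a - 1)) (by unfold colOf; ring)

lemma colOf_unique {n : ℤ} (hn : 0 < n) {C a b : ℤ} (hb : 1 ≤ b) (hbn : b ≤ n)
    (h : n ∣ 2 * a + b - C) : b = colOf n C a := by
  obtain ⟨h1, h2, h3⟩ := colOf_spec hn C a
  refine eq_of_dvd_sub hb hbn h1 h2 ?_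
  exact dvd_of_dvd_of_eq (dvd_sub h h3) (by ring)

lemma rowOf_spec {n : ℤ} (hn : 0 < n) (ho : Odd n) (C b : ℤ) :
    1 ≤ rowOf n C b ∧ rowOf n C b ≤ n ∧ n ∣ 2 * rowOf n C b + b - C := by
  have h1 := Int.emod_nonneg ((n + 1) / 2 * (C - b) - 1) hn.ne'
  have h2 := Int.emod_lt_of_pos ((n + 1) / 2 * (C - b) - 1) hn
  refine ⟨by unfold rowOf; omega, by unfold rowOf; omega, ?_⟩
  obtain ⟨h, rfl⟩ := ho
  have e : (2 * h + 1 + 1) / 2 = h + 1 := by omega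
  obtain ⟨q, hq⟩ := emod_dvd (2 * h + 1) ((2 * h + 1 + 1) / 2 * (C - b) - 1)
  unfold rowOf
  rw [e] at hq ⊢
  refine ⟨C - b - 2 * q, ?_⟩
  linear_combination (-2) * hq

lemma rowOf_unique {n : ℤ} (hn : 0 < n) (ho : Odd n) {C a b : ℤ} (ha : 1 ≤ a) (han : a ≤ n)
    (h : n ∣ 2 * a + b - C) : a = rowOf n C b := by
  obtain ⟨h1, h2, h3⟩ := rowOf_spec hn ho C b
  refine eq_of_dvd_sub ha han h1 h2 ?_
  have h4 : n ∣ 2 * (a - rowOf n C b) := by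
    exact dvd_of_dvd_of_eq (dvd_sub h h3) (by ring)
  refine IsCoprime.dvd_of_dvd_mul_left ?_ h4
  obtain ⟨q, rfl⟩ := ho
  exact ⟨1, -q, by ring⟩

lemma colOf_eq_iff {n : ℤ} (hn : 0 < n) (ho : Odd n) {C a b : ℤ} (ha : 1 ≤ a) (han : a ≤ n)
    (hb : 1 ≤ b) (hbn : b ≤ n) : colOf n C a = b ↔ rowOf n C b = a := by
  constructor
  · rintro rfl
    exact (rowOf_unique hn ho ha han (colOf_spec hn C a).2.2).symm
  · rintro rfl
    exact (colOf_unique hn hb hbn (rowOf_spec hn ho C b).2.2).symm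

lemma colOf_add (n C a : ℤ) : colOf n C (a + n) = colOf n C a := by
  unfold colOf
  congr 1
  rw [show C - 2 * (a + n) - 1 = C - 2 * a - 1 + n * (-2) by ring, Int.add_mul_emod_self_left]

/-- Corner sums of the matrix with a single `1` in each row `a`, at column `colOf n C a`. -/
def permSum (n C u v : ℤ) : ℤ := ∑ a ∈ Finset.Icc 1 u, if colOf n C a ≤ v then 1 else 0

lemma permSum_zero (n C v : ℤ) : permSum n C 0 v = 0 := by simp [permSum]

lemma permSum_row (n C : ℤ) {u : ℤ} (hu : 1 ≤ u) (v : ℤ) :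
    permSum n C u v = permSum n C (u-1) v + if colOf n C u ≤ v then 1 else 0 := by
  have : Finset.Icc 1 u = insert u (Finset.Icc 1 (u-1)) := by
    ext x; simp only [Finset.mem_Icc, Finset.mem_insert]; omega
  rw [permSum, this, Finset.sum_insert (by simp), permSum, add_comm]

lemma permSum_right {n : ℤ} (hn : 0 < n) (C u : ℤ) : permSum n C u 0 = 0 := by
  refine Finset.sum_eq_zero fun a _ => if_neg ?_
  have := colOf_spec hn C a
  omega

lemma permSum_top {n : ℤ} (hn : 0 < n) (C : ℤ) {u v : ℤ} (hu : 0 ≤ u) (hv : n ≤ v) :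
    permSum n C u v = u := by
  rw [permSum, Finset.sum_congr rfl (g := fun _ => 1)]
  · simp [hu]
  · intro a _
    have := colOf_spec hn C a
    exact if_pos (by omega)

lemma permSum_col {n : ℤ} (hn : 0 < n) (ho : Odd n) (C : ℤ) {v : ℤ} (hv : 1 ≤ v) (hvn : v ≤ n)
    {u : ℤ} (hu : 0 ≤ u) : u ≤ n →
    permSum n C u v = permSum n C u (v-1) + if rowOf n C v ≤ u then 1 else 0 := by
  have hr := rowOf_spec hn ho C v
  induction u, hu using Int.leInduction with
  | base => intro _; rw [permSum_zero, permSum_zero, if_neg (by omega), add_zero]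
  | succ u hu ih =>
    intro h
    have h1 := ih (by omega)
    have h2 := permSum_row n C (u := u+1) (by omega) v
    have h3 := permSum_row n C (u := u+1) (by omega) (v-1)
    rw [add_sub_cancel_right] at h2 h3
    have h4 := colOf_eq_iff hn ho (C := C) (a := u+1) (b := v) (by omega) h hv hvn
    rw [h2, h3, h1]
    by_cases h5 : colOf n C (u+1) = v
    · have := h4.1 h5
      split_ifs <;> omega
    · have : rowOf n C v ≠ u + 1 := fun h' => h5 (h4.2 h')
      split_ifs <;> omega

lemma permSum_n {n : ℤ} (hn : 0 < n) (ho : Odd n) (C : ℤ) {v : ℤ} (hv : 0 ≤ v) : v ≤ n →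
    permSum n C n v = v := by
  induction v, hv using Int.leInduction with
  | base => intro _; exact permSum_right hn C n
  | succ v hv ih =>
    intro h
    rw [permSum_col hn ho C (by omega) h hn.le le_rfl, add_sub_cancel_right, ih (by omega),
      if_pos (rowOf_spec hn ho C (v+1)).2.1]

/-! ### The case `k = n`: a single permutation matrix -/

lemma permSum_isCornerSum {n : ℤ} (hn : 0 < n) (ho : Odd n) (C : ℤ) :
    IsCornerSum n (permSum n C) where
  zero_left v _ _ := permSum_zero n C v
  zero_right u _ _ := permSum_right hn C u
  top_left v hv hvn := permSum_n hn ho C hv hvn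
  top_right u hu _ := permSum_top hn C hu le_rfl
  row u v hu _ _ _ := by rw [permSum_row n C hu]; split_ifs <;> omega
  col u v hu hun hv hvn := by rw [permSum_col hn ho C hv hvn hu hun]; split_ifs <;> omega

lemma permSum_isGood {n : ℤ} (hn : 0 < n) (C : ℤ) : IsGood n C n (permSum n C) := by
  intro a b ha han hb hbn h1 h2
  have h := colOf_spec hn C a
  rw [permSum_row n C ha] at h1 h2
  have : b = colOf n C a := by split_ifs at h1 h2 <;> omega
  rw [this]
  exact h.2.2

lemma eq_permSum {n C : ℤ} (hn : 0 < n) {c : ℤ → ℤ → ℤ} (hc : IsCornerSum n c)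
    (hg : IsGood n C n c) (u v : ℤ) (hu : 0 ≤ u) (hun : u ≤ n) (hv : 0 ≤ v) (hvn : v ≤ n) :
    c u v = permSum n C u v := by
  revert hun
  induction u, hu using Int.leInduction with
  | base => intro _; rw [permSum_zero, hc.zero_left v hv hvn]
  | succ u hu ih =>
    intro h
    rw [permSum_row n C (by omega), row_determined hc hg (by omega) h (colOf_spec hn C (u+1)).1
      (fun b h1 h2 h3 => colOf_unique hn h1 h2 h3) v hv hvn, add_sub_cancel_right, ih (by omega)]

/-! ### The case `k = n + 1` -/

/-- Corner sums of the `(n+1) × (n+1)` matrix obtained from the one of `permSum` by adding the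
row `e_{n+1} - e_{b₁}`, with `b₁ = colOf n C 1`, to row `a₀`. -/
def bigSum (n C a₀ u v : ℤ) : ℤ := permSum n C u v +
  if a₀ ≤ u then (if n + 1 ≤ v then 1 else 0) - (if colOf n C 1 ≤ v then 1 else 0) else 0

lemma bigSum_row (n C a₀ : ℤ) {u : ℤ} (hu : 1 ≤ u) (v : ℤ) :
    bigSum n C a₀ u v = bigSum n C a₀ (u-1) v + (if colOf n C u ≤ v then 1 else 0) +
      if u = a₀ then (if n + 1 ≤ v then 1 else 0) - (if colOf n C 1 ≤ v then 1 else 0) else 0 := by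
  rw [bigSum, bigSum, permSum_row n C hu]
  split_ifs <;> omega

lemma bigSum_top_left {n : ℤ} (hn : 0 < n) (ho : Odd n) {C a₀ : ℤ} (h2 : a₀ ≤ n + 1)
    {v : ℤ} (hv : 0 ≤ v) (hvn : v ≤ n + 1) : bigSum n C a₀ (n+1) v = v := by
  have hb := colOf_spec hn C 1
  rw [bigSum, if_pos h2, permSum_row n C (by omega), add_sub_cancel_right, add_comm n 1, colOf_add]
  by_cases h : v ≤ n
  · rw [permSum_n hn ho C hv h]
    split_ifs <;> omega
  · rw [permSum_top hn C hn.le (by omega)]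
    split_ifs <;> omega

lemma bigSum_isCornerSum {n : ℤ} (hn : 0 < n) (ho : Odd n) {C a₀ : ℤ} (h1 : 1 ≤ a₀)
    (h2 : a₀ ≤ n + 1) (h3 : colOf n C a₀ = 1) : IsCornerSum (n+1) (bigSum n C a₀) where
  zero_left v _ _ := by rw [bigSum, permSum_zero, if_neg (by omega), add_zero]
  zero_right u _ _ := by
    have hb := colOf_spec hn C 1
    rw [bigSum, permSum_right hn]
    split_ifs <;> omega
  top_left v hv hvn := bigSum_top_left hn ho h2 hv hvn
  top_right u hu _ := by
    have hb := colOf_spec hn C 1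
    rw [bigSum, permSum_top hn C hu (by omega)]
    split_ifs <;> omega
  row u v hu _ _ _ := by
    have hb := colOf_spec hn C 1
    rw [bigSum_row n C a₀ hu]
    by_cases h : u = a₀
    · rw [h, h3]
      split_ifs <;> omega
    · split_ifs <;> omega
  col u v hu hun hv hvn := by
    have hb := colOf_spec hn C 1
    by_cases hun' : u = n + 1
    · rw [hun', bigSum_top_left hn ho h2 (by omega) hvn,
        bigSum_top_left hn ho h2 (by omega) (by omega)]
      omega
    · by_cases hvn' : v = n + 1
      · rw [bigSum, bigSum, permSum_top hn C hu (by omega), permSum_top hn C hu (by omega)]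
        split_ifs <;> omega
      · rw [bigSum, bigSum, permSum_col hn ho C hv (by omega) hu (by omega)]
        by_cases hvb : colOf n C 1 = v
        · have := (colOf_eq_iff hn ho le_rfl (by omega) hv (by omega)).1 hvb
          split_ifs <;> omega
        · split_ifs <;> omega

lemma bigSum_isGood {n : ℤ} (hn : 0 < n) {C a₀ : ℤ} (h3 : colOf n C a₀ = 1) :
    IsGood n C (n+1) (bigSum n C a₀) := by
  intro a b ha han hb hbn e1 e2
  have hb1 := colOf_spec hn C 1
  have h := colOf_spec hn C a
  rw [bigSum_row n C a₀ ha] at e1 e2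
  by_cases haa : a = a₀
  · rw [haa, h3] at h
    rw [haa, h3, if_pos rfl] at e1 e2
    have : b = 1 ∨ b = n + 1 := by split_ifs at e1 e2 <;> omega
    rcases this with rfl | rfl
    · rw [haa]; exact h.2.2
    · rw [haa]
      exact dvd_of_dvd_of_eq (dvd_add h.2.2 (dvd_refl n)) (by ring)
  · rw [if_neg haa] at e1 e2
    have : b = colOf n C a := by split_ifs at e1 e2 <;> omega
    rw [this]
    exact h.2.2

/-- All rows but one determine a corner-sum function, since its last row is prescribed. -/
lemma eq_bigSum_of_rows {n C a₀ : ℤ} (hn : 0 < n) (ho : Odd n) (h1 : 1 ≤ a₀) (h2 : a₀ ≤ n + 1)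
    {c : ℤ → ℤ → ℤ} (hc : IsCornerSum (n+1) c)
    (hr : ∀ a, 1 ≤ a → a ≤ n + 1 → a ≠ a₀ → ∀ v, 0 ≤ v → v ≤ n + 1 →
      c a v = c (a-1) v + if colOf n C a ≤ v then 1 else 0)
    (u v : ℤ) (hu : 0 ≤ u) (hun : u ≤ n + 1) (hv : 0 ≤ v) (hvn : v ≤ n + 1) :
    c u v = bigSum n C a₀ u v := by
  by_cases h : u < a₀
  · revert hun h
    induction u, hu using Int.leInduction with
    | base =>
      intro _ _
      rw [hc.zero_left v hv hvn, bigSum, permSum_zero, if_neg (by omega), add_zero]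
    | succ u hu ih =>
      intro h3 h4
      rw [bigSum_row n C a₀ (by omega), hr (u+1) (by omega) h3 (by omega) v hv hvn,
        if_neg (show ¬ u + 1 = a₀ by omega), add_sub_cancel_right, ih (by omega) (by omega),
        add_zero]
  · revert hu h
    induction u, hun using Int.leInductionDown with
    | base =>
      intro _ _
      rw [hc.top_left v hv hvn, bigSum_top_left hn ho h2 hv hvn]
    | pred u hun ih =>
      intro h3 h4
      have e := ih (by omega) (by omega)
      rw [bigSum_row n C a₀ (by omega), hr u (by omega) hun (by omega) v hv hvn,
        if_neg (show ¬ u = a₀ by omega)] at e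
      omega

/-- Classification of the surviving matrices of size `n + 1`: only the rows with admissible
columns `1` and `n + 1` leave any freedom, and there the other rows and the prescribed borders
decide. -/
lemma eq_bigSum {n C : ℤ} (hn : 1 < n) (ho : Odd n) {c : ℤ → ℤ → ℤ}
    (hc : IsCornerSum (n+1) c) (hg : IsGood n C (n+1) c) :
    ∃ a₀, 1 ≤ a₀ ∧ a₀ ≤ n + 1 ∧ colOf n C a₀ = 1 ∧
      ∀ u v, 0 ≤ u → u ≤ n + 1 → 0 ≤ v → v ≤ n + 1 → c u v = bigSum n C a₀ u v := by
  have hn0 : 0 < n := by omega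
  have hrow : ∀ a, 1 ≤ a → a ≤ n + 1 → colOf n C a ≠ 1 → ∀ v, 0 ≤ v → v ≤ n + 1 →
      c a v = c (a-1) v + if colOf n C a ≤ v then 1 else 0 := by
    intro a ha han hne v hv hvn
    refine row_determined hc hg ha han (colOf_spec hn0 C a).1 (fun b hb1 hb2 hb3 => ?_) v hv hvn
    by_cases hbn : b ≤ n
    · exact colOf_unique hn0 hb1 hbn hb3
    · exfalso
      apply hne
      refine (colOf_unique hn0 le_rfl (by omega) ?_).symm
      exact dvd_of_dvd_of_eq (dvd_sub hb3 (dvd_refl n)) (by omega)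
  have hcol1 : ∀ a, 1 ≤ a → a ≤ n → (colOf n C a = 1 ↔ rowOf n C 1 = a) := fun a h1 h2 =>
    colOf_eq_iff hn0 ho h1 h2 le_rfl (by omega)
  have hlast : colOf n C (n+1) = colOf n C 1 := by rw [add_comm, colOf_add]
  obtain ⟨ha1, ha2, -⟩ := rowOf_spec hn0 ho C 1
  by_cases hone : colOf n C 1 = 1
  · have hrow1 := (hcol1 1 le_rfl hn0).1 hone
    have hmid : ∀ a, 1 < a → a ≤ n → colOf n C a ≠ 1 := by
      intro a h1 h2 h3
      have := (hcol1 a (by omega) h2).1 h3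
      omega
    have hc1 := hc.row 1 1 le_rfl (by omega) (by omega) (by omega)
    rw [sub_self, hc.zero_left 1 (by omega) (by omega)] at hc1
    -- The position of the `1` in row `1` is either `1` or `n + 1`; each choice determines `c`.
    by_cases h11 : c 1 1 = 1
    · refine ⟨n + 1, by omega, le_rfl, by rw [hlast, hone],
        eq_bigSum_of_rows hn0 ho (by omega) le_rfl hc fun a h1 h2 h3 v hv hvn => ?_⟩
      by_cases ha : a = 1
      · rw [ha, hone, sub_self, hc.zero_left v hv hvn, zero_add]
        have hpos : ∀ v, 1 ≤ v → v ≤ n + 1 → 1 ≤ c 1 v := by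
          intro v hv
          induction v, hv using Int.leInduction with
          | base => intro _; omega
          | succ v hv ih =>
            intro h
            have h4 := hc.col 1 (v+1) (by omega) (by omega) (by omega) h
            rw [add_sub_cancel_right] at h4
            have := ih (by omega)
            omega
        split_ifs with hv1
        · have := hc.bounds (u := 1) (v := v) (by omega) (by omega) hv hvn
          have := hpos v hv1 hvn
          omega
        · rw [show v = 0 by omega, hc.zero_right 1 (by omega) (by omega)]
      · exact hrow a h1 h2 (hmid a (by omega) (by omega)) v hv hvn
    · refine ⟨1, le_rfl, by omega, hone,
        eq_bigSum_of_rows hn0 ho le_rfl (by omega) hc fun a h1 h2 h3 v hv hvn => ?_⟩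
      by_cases ha : a = n + 1
      · rw [ha, hlast, hone, add_sub_cancel_right, hc.top_left v hv hvn]
        have hz : ∀ u, 1 ≤ u → u ≤ n → c u 1 = 0 := by
          intro u hu
          induction u, hu using Int.leInduction with
          | base => intro _; omega
          | succ u hu ih =>
            intro h
            have hne := hmid (u+1) (by omega) h
            have := colOf_spec hn0 C (u+1)
            rw [hrow (u+1) (by omega) (by omega) hne 1 (by omega) (by omega),
              add_sub_cancel_right, ih (by omega), if_neg (by omega), zero_add]
        have hle : ∀ v, 1 ≤ v → v ≤ n + 1 → c n v ≤ v - 1 := by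
          intro v hv
          induction v, hv using Int.leInduction with
          | base => intro _; rw [hz n (by omega) le_rfl]; omega
          | succ v hv ih =>
            intro h
            have h4 := hc.col n (v+1) (by omega) (by omega) (by omega) h
            rw [add_sub_cancel_right] at h4
            have := ih (by omega)
            omega
        split_ifs with hv1
        · have := hle v hv1 hvn
          have := hc.bounds (u := n) (v := v) (by omega) (by omega) hv hvn
          omega
        · rw [show v = 0 by omega, hc.zero_right n (by omega) (by omega)]; rfl
      · exact hrow a h1 h2 (hmid a (by omega) (by omega)) v hv hvn
  · have hspec := (hcol1 _ ha1 ha2).2 rfl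
    refine ⟨rowOf n C 1, ha1, by omega, hspec,
      eq_bigSum_of_rows hn0 ho ha1 (by omega) hc fun a h1 h2 h3 => hrow a h1 h2 ?_⟩
    intro h4
    by_cases ha : a = n + 1
    · rw [ha, hlast] at h4
      exact hone h4
    · exact h3 ((hcol1 a h1 (by omega)).1 h4).symm


/-! ### Weights as products over positions -/

/-- A product over the levels between `f` and `g`, with weights depending only on the position. -/
lemma prod_levels (K : ℤ) (f g : ℤ → ℤ → ℤ) (W : ℤ → ℤ → ℝ)
    (h : ∀ a b, 1 ≤ a → a ≤ K - 1 → 1 ≤ b → b ≤ K - 1 →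
      0 ≤ f a b ∧ a + b - K ≤ f a b ∧ g a b ≤ a ∧ g a b ≤ b) :
    ∏ q ∈ (gridE K).filter (fun q => f q.1 q.2.1 < q.2.2 ∧ q.2.2 ≤ g q.1 q.2.1), W q.1 q.2.1 =
      ∏ x ∈ Finset.Icc 1 (K-1) ×ˢ Finset.Icc 1 (K-1), W x.1 x.2 ^ (g x.1 x.2 - f x.1 x.2).toNat := by
  rw [gridE, Finset.filter_filter, Finset.prod_filter, Finset.prod_product, Finset.prod_product]
  refine Finset.prod_congr rfl fun a ha => ?_
  rw [Finset.prod_product]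
  refine Finset.prod_congr rfl fun b hb => ?_
  rw [Finset.mem_Icc] at ha hb
  have := h a b ha.1 ha.2 hb.1 hb.2
  rw [← Finset.prod_filter]
  dsimp only
  rw [Finset.prod_const]
  congr 1
  rw [← Int.card_Ioc]
  congr 1
  ext m
  simp only [Finset.mem_filter, Finset.mem_Icc, Finset.mem_Ioc]
  omega

/-- The contribution of the position `(a, b)` of weight `w` to `freeFactor`. -/
def levelWt (c : ℤ → ℤ → ℤ) (w : ℝ) (a b : ℤ) : ℝ :=
  w ^ (min a b - forcedLevel c a b).toNat * (1 + w) ^ (forcedLevel c a b - allowedLevel c a b).toNat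

lemma freeFactor_eq {y : ℤ → ℝ} {j k : ℤ} {c : ℤ → ℤ → ℤ} (hc : IsCornerSum k c) :
    freeFactor y j k (cornerSet k c) = ∏ x ∈ Finset.Icc 1 k ×ˢ Finset.Icc 1 k,
      levelWt c (y (4 * x.1 + 2 * x.2 - 3 * (k+1) + j)) x.1 x.2 := by
  have hb : ∀ a b, 1 ≤ a → a ≤ k → 1 ≤ b → b ≤ k →
      (0 ≤ forcedLevel c a b ∧ a + b - (k+1) ≤ forcedLevel c a b ∧
        forcedLevel c a b ≤ a ∧ forcedLevel c a b ≤ b) ∧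
      (0 ≤ allowedLevel c a b ∧ a + b - (k+1) ≤ allowedLevel c a b) := by
    intro a b h1 h2 h3 h4
    have b1 := hc.bounds (u := a) (v := b) (by omega) (by omega) (by omega) (by omega)
    have b2 := hc.bounds (u := a-1) (v := b-1) (by omega) (by omega) (by omega) (by omega)
    have b3 := hc.bounds (u := a) (v := b-1) (by omega) (by omega) (by omega) (by omega)
    have b4 := hc.bounds (u := a-1) (v := b) (by omega) (by omega) (by omega) (by omega)
    simp only [forcedLevel, allowedLevel]
    omega
  have e1 := prod_levels (k+1) (forcedLevel c) (fun a b => min a b)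
    (fun a b => y (4 * a + 2 * b - 3 * (k+1) + j)) (by
      intro a b h1 h2 h3 h4
      have := hb a b h1 (by omega) h3 (by omega)
      omega)
  have e2 := prod_levels (k+1) (allowedLevel c) (forcedLevel c)
    (fun a b => 1 + y (4 * a + 2 * b - 3 * (k+1) + j)) (by
      intro a b h1 h2 h3 h4
      have := hb a b h1 (by omega) h3 (by omega)
      omega)
  rw [add_sub_cancel_right] at e1 e2
  simp only [levelWt]
  rw [Finset.prod_mul_distrib, ← e1, ← e2, freeFactor, if_pos (forced_subset_allowed hc),
    forcedSet_cornerSet hc, allowedSet_cornerSet hc]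
  congr 1
  · refine Finset.prod_congr ?_ fun _ _ => rfl
    ext q
    simp only [Finset.mem_filter, mem_gridE]
    omega
  · refine Finset.prod_congr ?_ fun _ _ => rfl
    ext q
    simp only [Finset.mem_sdiff, Finset.mem_filter]
    constructor
    · rintro ⟨⟨h1, h2⟩, h3⟩
      exact ⟨h1, h2, not_lt.1 fun h => h3 ⟨h1, h⟩⟩
    · rintro ⟨h1, h2, h3⟩
      exact ⟨⟨h1, h2⟩, fun h => absurd h.2 (not_lt.2 h3)⟩

lemma prod_cornerSet {y : ℤ → ℝ} {j k : ℤ} {c : ℤ → ℤ → ℤ} (hc : IsCornerSum k c) :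
    ∏ q ∈ cornerSet k c, gridWt y j k q = ∏ x ∈ Finset.Icc 1 (k-1) ×ˢ Finset.Icc 1 (k-1),
      y (4 * x.1 + 2 * x.2 - 3 * k + j) ^ (min x.1 x.2 - c x.1 x.2).toNat := by
  rw [← prod_levels k c (fun a b => min a b) (fun a b => y (4 * a + 2 * b - 3 * k + j))]
  · refine Finset.prod_congr ?_ fun _ _ => rfl
    ext q
    simp only [cornerSet, Finset.mem_filter, mem_gridE]
    omega
  · intro a b h1 h2 h3 h4
    have := hc.bounds (u := a) (v := b) (by omega) (by omega) (by omega) (by omega)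
    omega

/-! ### Comparing two corner-sum functions that differ by `1` at all interior vertices -/

lemma prod_cornerSet_shift {y : ℤ → ℝ} {j k : ℤ} {c c' : ℤ → ℤ → ℤ} (hc : IsCornerSum k c)
    (hc' : IsCornerSum k c')
    (h : ∀ u v, 1 ≤ u → u ≤ k - 1 → 1 ≤ v → v ≤ k - 1 → c' u v = c u v - 1) :
    ∏ q ∈ cornerSet k c', gridWt y j k q = (∏ q ∈ cornerSet k c, gridWt y j k q) *
      ∏ x ∈ Finset.Icc 1 (k-1) ×ˢ Finset.Icc 1 (k-1), y (4 * x.1 + 2 * x.2 - 3 * k + j) := by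
  rw [prod_cornerSet hc, prod_cornerSet hc', ← Finset.prod_mul_distrib]
  refine Finset.prod_congr rfl fun x hx => ?_
  simp only [Finset.mem_product, Finset.mem_Icc] at hx
  rw [← pow_succ]
  congr 1
  have h1 := hc.bounds (u := x.1) (v := x.2) (by omega) (by omega) (by omega) (by omega)
  have h2 := h x.1 x.2 (by omega) (by omega) (by omega) (by omega)
  omega

lemma forcedLevel_shift {k : ℤ} {c c' : ℤ → ℤ → ℤ} (hk : 2 ≤ k) (hc : IsCornerSum k c)
    (hc' : IsCornerSum k c')
    (h : ∀ u v, 1 ≤ u → u ≤ k - 1 → 1 ≤ v → v ≤ k - 1 → c' u v = c u v - 1)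
    {a b : ℤ} (ha : 1 ≤ a) (hak : a ≤ k) (hb : 1 ≤ b) (hbk : b ≤ k) :
    forcedLevel c' a b =
      forcedLevel c a b - if (a = 1 ∧ b = k) ∨ (a = k ∧ b = 1) then 0 else 1 := by
  have b1 := hc.bounds (u := a) (v := b) (by omega) (by omega) (by omega) (by omega)
  have b2 := hc.bounds (u := a-1) (v := b-1) (by omega) (by omega) (by omega) (by omega)
  have d1 := hc'.bounds (u := a) (v := b) (by omega) (by omega) (by omega) (by omega)
  have d2 := hc'.bounds (u := a-1) (v := b-1) (by omega) (by omega) (by omega) (by omega)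
  simp only [forcedLevel]
  rcases (by omega : a = k ∨ b = k ∨ (a ≤ k - 1 ∧ b ≤ k - 1)) with h1 | h1 | h1 <;>
    rcases (by omega : a = 1 ∨ b = 1 ∨ (1 ≤ a - 1 ∧ 1 ≤ b - 1)) with h2 | h2 | h2 <;>
    split_ifs with h3 <;>
    first
    | omega
    | (have e1 := h a b ha h1.1 hb h1.2
       omega)
    | (have e2 := h (a-1) (b-1) h2.1 (by omega) h2.2 (by omega)
       omega)
    | (have e1 := h a b ha h1.1 hb h1.2
       have e2 := h (a-1) (b-1) h2.1 (by omega) h2.2 (by omega)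
       omega)

lemma allowedLevel_shift {k : ℤ} {c c' : ℤ → ℤ → ℤ} (hk : 2 ≤ k) (hc : IsCornerSum k c)
    (hc' : IsCornerSum k c')
    (h : ∀ u v, 1 ≤ u → u ≤ k - 1 → 1 ≤ v → v ≤ k - 1 → c' u v = c u v - 1)
    {a b : ℤ} (ha : 1 ≤ a) (hak : a ≤ k) (hb : 1 ≤ b) (hbk : b ≤ k) :
    allowedLevel c' a b =
      allowedLevel c a b - if (a = 1 ∧ b = 1) ∨ (a = k ∧ b = k) then 0 else 1 := by
  have b1 := hc.bounds (u := a) (v := b-1) (by omega) (by omega) (by omega) (by omega)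
  have b2 := hc.bounds (u := a-1) (v := b) (by omega) (by omega) (by omega) (by omega)
  have d1 := hc'.bounds (u := a) (v := b-1) (by omega) (by omega) (by omega) (by omega)
  have d2 := hc'.bounds (u := a-1) (v := b) (by omega) (by omega) (by omega) (by omega)
  simp only [allowedLevel]
  rcases (by omega : a = k ∨ b = 1 ∨ (a ≤ k - 1 ∧ 1 ≤ b - 1)) with h1 | h1 | h1 <;>
    rcases (by omega : a = 1 ∨ b = k ∨ (1 ≤ a - 1 ∧ b ≤ k - 1)) with h2 | h2 | h2 <;>
    split_ifs with h3 <;>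
    first
    | omega
    | (have e1 := h a (b-1) ha h1.1 h1.2 (by omega)
       omega)
    | (have e2 := h (a-1) b h2.1 (by omega) hb h2.2
       omega)
    | (have e1 := h a (b-1) ha h1.1 h1.2 (by omega)
       have e2 := h (a-1) b h2.1 (by omega) hb h2.2
       omega)

/-- Position by position comparison: away from the corners the exponent of `w` grows by one;
the corners `(1,1)`, `(k,k)` are no longer free and become forced, while the corners `(1,k)`,
`(k,1)` become free. -/
lemma levelWt_shift {k : ℤ} {c c' : ℤ → ℤ → ℤ} (hk : 2 ≤ k) (hc : IsCornerSum k c)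
    (hc' : IsCornerSum k c')
    (h : ∀ u v, 1 ≤ u → u ≤ k - 1 → 1 ≤ v → v ≤ k - 1 → c' u v = c u v - 1) (w : ℝ)
    {a b : ℤ} (ha : 1 ≤ a) (hak : a ≤ k) (hb : 1 ≤ b) (hbk : b ≤ k) :
    levelWt c' w a b * (if (a, b) = (1, 1) ∨ (a, b) = (k, k) then 1 + w else 1) *
        (if (a, b) = (1, k) ∨ (a, b) = (k, 1) then w else 1) =
      levelWt c w a b * w * (if (a, b) = (1, k) ∨ (a, b) = (k, 1) then 1 + w else 1) := by
  have hF := forcedLevel_shift hk hc hc' h ha hak hb hbk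
  have hA := allowedLevel_shift hk hc hc' h ha hak hb hbk
  have l1 := hc.level_le ha hak hb hbk
  have l2 := hc'.level_le ha hak hb hbk
  have l3 : forcedLevel c a b ≤ a ∧ forcedLevel c a b ≤ b := by
    have b1 := hc.bounds (u := a) (v := b) (by omega) (by omega) (by omega) (by omega)
    simp only [forcedLevel]
    omega
  have l4 : 0 ≤ allowedLevel c a b ∧ 0 ≤ allowedLevel c' a b ∧
      a + b - 1 - k ≤ allowedLevel c a b ∧ a + b - 1 - k ≤ allowedLevel c' a b := by
    have b1 := hc.bounds (u := a) (v := b-1) (by omega) (by omega) (by omega) (by omega)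
    have d1 := hc'.bounds (u := a) (v := b-1) (by omega) (by omega) (by omega) (by omega)
    simp only [allowedLevel]
    omega
  simp only [Prod.mk.injEq, levelWt]
  by_cases c1 : (a = 1 ∧ b = 1) ∨ (a = k ∧ b = k)
  · have c2 : ¬ ((a = 1 ∧ b = k) ∨ (a = k ∧ b = 1)) := by omega
    rw [if_pos c1] at hA
    rw [if_neg c2] at hF
    rw [if_pos c1, if_neg c2, if_neg c2,
      show (min a b - forcedLevel c' a b).toNat = 1 by omega,
      show (forcedLevel c' a b - allowedLevel c' a b).toNat = 0 by omega,
      show (min a b - forcedLevel c a b).toNat = 0 by omega,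
      show (forcedLevel c a b - allowedLevel c a b).toNat = 1 by omega]
    ring
  · rw [if_neg c1] at hA ⊢
    by_cases c2 : (a = 1 ∧ b = k) ∨ (a = k ∧ b = 1)
    · rw [if_pos c2] at hF
      rw [if_pos c2, if_pos c2,
        show (min a b - forcedLevel c' a b).toNat = 0 by omega,
        show (forcedLevel c' a b - allowedLevel c' a b).toNat = 1 by omega,
        show (min a b - forcedLevel c a b).toNat = 0 by omega,
        show (forcedLevel c a b - allowedLevel c a b).toNat = 0 by omega]
      ring
    · rw [if_neg c2] at hF
      rw [if_neg c2, if_neg c2,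
        show (min a b - forcedLevel c' a b).toNat = (min a b - forcedLevel c a b).toNat + 1 by
          omega,
        show (forcedLevel c' a b - allowedLevel c' a b).toNat =
          (forcedLevel c a b - allowedLevel c a b).toNat by omega]
      ring

lemma prod_two_points {S : Finset (ℤ × ℤ)} {p q : ℤ × ℤ} (hp : p ∈ S) (hq : q ∈ S) (hpq : p ≠ q)
    (f : ℤ × ℤ → ℝ) : ∏ x ∈ S, (if x = p ∨ x = q then f x else 1) = f p * f q := by
  rw [← Finset.prod_filter, ← Finset.prod_pair hpq]
  refine Finset.prod_congr ?_ fun _ _ => rfl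
  ext x
  simp only [Finset.mem_filter, Finset.mem_insert, Finset.mem_singleton, and_iff_right_iff_imp]
  rintro (rfl | rfl) <;> assumption

/-- The effect on `freeFactor` of lowering `c` by `1` at all interior vertices, when the four
corner positions carry the same weight `e`. -/
lemma freeFactor_shift {y : ℤ → ℝ} {j k : ℤ} {c c' : ℤ → ℤ → ℤ} (hk : 2 ≤ k)
    (hc : IsCornerSum k c) (hc' : IsCornerSum k c')
    (h : ∀ u v, 1 ≤ u → u ≤ k - 1 → 1 ≤ v → v ≤ k - 1 → c' u v = c u v - 1) (e : ℝ)
    (he : e ≠ -1) (h11 : y (4 * 1 + 2 * 1 - 3 * (k+1) + j) = e)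
    (hkk : y (4 * k + 2 * k - 3 * (k+1) + j) = e)
    (h1k : y (4 * 1 + 2 * k - 3 * (k+1) + j) = e)
    (hk1 : y (4 * k + 2 * 1 - 3 * (k+1) + j) = e) :
    freeFactor y j k (cornerSet k c') * (e * e) = freeFactor y j k (cornerSet k c) *
      ∏ x ∈ Finset.Icc 1 k ×ˢ Finset.Icc 1 k, y (4 * x.1 + 2 * x.2 - 3 * (k+1) + j) := by
  have m1 : ∀ a b : ℤ, 1 ≤ a → a ≤ k → 1 ≤ b → b ≤ k →
      (a, b) ∈ Finset.Icc 1 k ×ˢ Finset.Icc 1 k := by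
    intro a b _ _ _ _
    simp only [Finset.mem_product, Finset.mem_Icc]
    omega
  have n1 : ((1 : ℤ), (1 : ℤ)) ≠ (k, k) := by simp only [ne_eq, Prod.mk.injEq]; omega
  have n2 : ((1 : ℤ), k) ≠ (k, (1 : ℤ)) := by simp only [ne_eq, Prod.mk.injEq]; omega
  have key := Finset.prod_congr (rfl : Finset.Icc 1 k ×ˢ Finset.Icc 1 k = _) fun x hx => by
    simp only [Finset.mem_product, Finset.mem_Icc] at hx
    exact levelWt_shift hk hc hc' h (y (4 * x.1 + 2 * x.2 - 3 * (k+1) + j))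
      hx.1.1 hx.1.2 hx.2.1 hx.2.2
  simp only [Prod.mk.eta] at key
  rw [Finset.prod_mul_distrib, Finset.prod_mul_distrib, Finset.prod_mul_distrib,
    Finset.prod_mul_distrib, ← freeFactor_eq hc, ← freeFactor_eq hc',
    prod_two_points (m1 1 1 (by omega) (by omega) (by omega) (by omega))
      (m1 k k (by omega) (by omega) (by omega) (by omega)) n1
      (fun x => 1 + y (4 * x.1 + 2 * x.2 - 3 * (k+1) + j)),
    prod_two_points (m1 1 k (by omega) (by omega) (by omega) (by omega))
      (m1 k 1 (by omega) (by omega) (by omega) (by omega)) n2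
      (fun x => y (4 * x.1 + 2 * x.2 - 3 * (k+1) + j)),
    prod_two_points (m1 1 k (by omega) (by omega) (by omega) (by omega))
      (m1 k 1 (by omega) (by omega) (by omega) (by omega)) n2
      (fun x => 1 + y (4 * x.1 + 2 * x.2 - 3 * (k+1) + j))] at key
  simp only [h11, hkk, h1k, hk1] at key
  have hne : (1 + e) * (1 + e) ≠ 0 := by
    have : 1 + e ≠ 0 := fun h0 => he (by linarith)
    exact mul_ne_zero this this
  refine mul_right_cancel₀ hne ?_
  linear_combination key

/-! ### Periodic products -/

lemma prod_Icc_succ (f : ℤ → ℝ) {n : ℤ} (hn : 0 ≤ n) :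
    ∏ i ∈ Finset.Icc 1 (n+1), f i = (∏ i ∈ Finset.Icc 1 n, f i) * f (n+1) := by
  have : Finset.Icc 1 (n+1) = insert (n+1) (Finset.Icc 1 n) := by
    ext x; simp only [Finset.mem_Icc, Finset.mem_insert]; omega
  rw [this, Finset.prod_insert (by simp), mul_comm]

lemma prod_shift_one (f : ℤ → ℝ) {n : ℤ} (hn : 0 < n) (hf : ∀ i, f (i + n) = f i) :
    ∏ i ∈ Finset.Icc 1 n, f (i + 1) = ∏ i ∈ Finset.Icc 1 n, f i := by
  have h1 : Finset.Icc 1 n = insert n (Finset.Icc 1 (n-1)) := by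
    ext x; simp only [Finset.mem_Icc, Finset.mem_insert]; omega
  have h2 : Finset.Icc 1 n = insert 1 (Finset.Icc 2 n) := by
    ext x; simp only [Finset.mem_Icc, Finset.mem_insert]; omega
  have h3 : Finset.Icc 2 n = (Finset.Icc 1 (n-1)).image (· + 1) := by
    ext x
    simp only [Finset.mem_Icc, Finset.mem_image]
    exact ⟨fun h => ⟨x - 1, by omega, by omega⟩, by rintro ⟨z, h, rfl⟩; omega⟩
  conv_lhs => rw [h1, Finset.prod_insert (by simp), add_comm n 1, hf]
  rw [h2, Finset.prod_insert (by simp), h3, Finset.prod_image (fun _ _ _ _ h => by simpa using h)]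

lemma prod_shift (f : ℤ → ℝ) {n : ℤ} (hn : 0 < n) (hf : ∀ i, f (i + n) = f i) (x : ℤ) :
    ∏ i ∈ Finset.Icc 1 n, f (i + x) = ∏ i ∈ Finset.Icc 1 n, f i := by
  have step : ∀ x : ℤ, ∏ i ∈ Finset.Icc 1 n, f (i + (x + 1)) = ∏ i ∈ Finset.Icc 1 n, f (i + x) := by
    intro x
    rw [← prod_shift_one (fun i => f (i + x)) hn
      (fun i => by rw [show i + n + x = i + x + n by ring, hf])]
    refine Finset.prod_congr rfl fun i _ => ?_
    rw [show i + (x + 1) = i + 1 + x by ring]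
  induction x using Int.induction_on with
  | zero => simp
  | succ i ih => rw [step, ih]
  | pred i ih => rw [← ih, ← step, sub_add_cancel]

lemma prod_split (f : ℤ → ℝ) {n : ℤ} (hn : 0 ≤ n) : ∏ i ∈ Finset.Icc 1 (2 * n), f i =
    (∏ i ∈ Finset.Icc 1 n, f (2 * i - 1)) * ∏ i ∈ Finset.Icc 1 n, f (2 * i) := by
  induction n, hn using Int.leInduction with
  | base => simp
  | succ n hn ih =>
    rw [prod_Icc_succ _ hn, prod_Icc_succ _ hn, show 2 * (n + 1) = 2 * n + 1 + 1 by ring,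
      prod_Icc_succ _ (by omega), prod_Icc_succ _ (by omega), ih, add_sub_cancel_right]
    ring


/-! ### The specialised variables -/

lemma y_even {n : ℤ} (hn : 3 ≤ n) {y : ℤ → ℝ} (hper : ∀ i : ℤ, y (i + 2 * n) = y i)
    (hneg : ∀ i ∈ AP 2 (2 * n - 2) 2, y i = -1) (x : ℤ) :
    y (2 * x) = if n ∣ x then y 0 else -1 := by
  have hp : Function.Periodic y (2 * n) := hper
  have e : y (2 * x) = y (2 * (x % n)) := by
    rw [← hp.int_mul (x / n) (2 * (x % n))]
    congr 1
    have := Int.emod_add_mul_ediv x n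
    push_cast
    linear_combination (-2) * this
  rw [e]
  split_ifs with h
  · rw [Int.emod_eq_zero_of_dvd h, mul_zero]
  · have h1 : x % n ≠ 0 := fun h0 => h (Int.dvd_of_emod_eq_zero h0)
    have h2 := Int.emod_nonneg x (by omega : n ≠ 0)
    have h3 := Int.emod_lt_of_pos x (by omega : 0 < n)
    exact hneg _ ⟨by omega, by omega, by omega⟩

lemma prod_single {n : ℤ} (hn : 1 ≤ n) (ho : Odd n) {g : ℤ → ℝ} {e : ℝ} (h1 : g 1 = e)
    (h : ∀ a, 2 ≤ a → a ≤ n → g a = -1) : ∏ a ∈ Finset.Icc 1 n, g a = e := by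
  have h2 : Finset.Icc 1 n = insert 1 (Finset.Icc 2 n) := by
    ext x; simp only [Finset.mem_Icc, Finset.mem_insert]; omega
  have h3 : Even (n + 1 - 2).toNat := by
    obtain ⟨m, rfl⟩ := ho
    exact ⟨m.toNat, by omega⟩
  rw [h2, Finset.prod_insert (by simp), h1,
    Finset.prod_congr rfl fun a ha => h a (Finset.mem_Icc.1 ha).1 (Finset.mem_Icc.1 ha).2,
    Finset.prod_const, Int.card_Icc, h3.neg_one_pow, mul_one]

lemma prod_even {n : ℤ} (hn : 3 ≤ n) (ho : Odd n) {y : ℤ → ℝ}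
    (hper : ∀ i : ℤ, y (i + 2 * n) = y i)
    (hneg : ∀ i ∈ AP 2 (2 * n - 2) 2, y i = -1) (x : ℤ) :
    ∏ i ∈ Finset.Icc 1 n, y (2 * (i + x)) = y 0 := by
  have hf : ∀ i, y (2 * (i + n)) = y (2 * i) := fun i => by rw [mul_add, hper]
  rw [prod_shift (fun i => y (2 * i)) (by omega) hf x,
    ← prod_shift (fun i => y (2 * i)) (by omega) hf (-1)]
  refine prod_single (by omega) ho (by norm_num) fun a h1 h2 => ?_
  exact hneg _ ⟨by omega, by omega, by omega⟩

lemma prod_odd {n : ℤ} (hn : 3 ≤ n) (ho : Odd n) {y : ℤ → ℝ}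
    (hper : ∀ i : ℤ, y (i + 2 * n) = y i)
    (hneg : ∀ i ∈ AP 2 (2 * n - 2) 2, y i = -1)
    (hprod : ∏ i ∈ Finset.Icc (1 : ℤ) (2 * n), y i = 1) (x : ℤ) :
    (∏ i ∈ Finset.Icc 1 n, y (2 * (i + x) - 1)) * y 0 = 1 := by
  have hf : ∀ i, y (2 * (i + n) - 1) = y (2 * i - 1) := fun i => by
    rw [show 2 * (i + n) - 1 = 2 * i - 1 + 2 * n by ring, hper]
  rw [prod_shift (fun i => y (2 * i - 1)) (by omega) hf x, ← hprod, prod_split y (by omega)]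
  congr 1
  rw [← prod_even hn ho hper hneg 0]
  simp only [add_zero]

/-! ### The surviving terms -/

/-- The total weight of the order ideals whose part in `Q_k` is `J`. -/
def termOf (y : ℤ → ℝ) (j k : ℤ) (J : Finset (ℤ × ℤ × ℤ)) : ℝ :=
  (∏ q ∈ J, gridWt y j k q) * freeFactor y j k J

lemma cornerSet_mem (k : ℤ) (c : ℤ → ℤ → ℤ) : cornerSet k c ∈ (gridE k).powerset :=
  Finset.mem_powerset.2 (Finset.filter_subset _ _)

lemma termOf_ne_zero {y : ℤ → ℝ} {j k n C : ℤ} {c : ℤ → ℤ → ℤ} (hc : IsCornerSum k c)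
    (hnz : ∀ i, y i ≠ 0)
    (hw : ∀ a b, y (4 * a + 2 * b - 3 * (k+1) + j) = -1 ↔ ¬ n ∣ 2 * a + b - C)
    (hg : IsGood n C k c) : termOf y j k (cornerSet k c) ≠ 0 :=
  mul_ne_zero (Finset.prod_ne_zero_iff.2 fun _ _ => hnz _)
    ((freeFactor_ne_zero_iff hc hnz hw).2 hg)

lemma exists_good {y : ℤ → ℝ} {j k n C : ℤ} (hnz : ∀ i, y i ≠ 0)
    (hw : ∀ a b, y (4 * a + 2 * b - 3 * (k+1) + j) = -1 ↔ ¬ n ∣ 2 * a + b - C)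
    {J : Finset (ℤ × ℤ × ℤ)} (hJ : J ∈ (gridE k).powerset) (h : termOf y j k J ≠ 0) :
    ∃ c, IsCornerSum k c ∧ IsGood n C k c ∧ J = cornerSet k c := by
  have hF : freeFactor y j k J ≠ 0 := right_ne_zero_of_mul h
  have hFA : forcedSet k J ⊆ allowedSet k J := by
    by_contra hn
    exact hF (if_neg hn)
  obtain ⟨c, hc, rfl⟩ := exists_corner (Finset.mem_powerset.1 hJ) hFA
  exact ⟨c, hc, (freeFactor_ne_zero_iff hc hnz hw).1 hF, rfl⟩

/-- When `(1, 1)` is an admissible position, the two surviving terms for `k = n + 1` differ by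
the factor `y 0`. Passing from `c` to `c'` multiplies the `Q_{n+1}` part by all odd-indexed weights
of the `n × n` grid, i.e. by `y(0)^(-n)` since every row has product `1 / y(0)`, and the `Q_{n+2}`
part by the product of the even-indexed weights of the `(n+1) × (n+1)` grid divided by `y(0)^2`,
which is `y(0)^(n+1)` since each row has product `y(0)` times its last entry. -/
lemma termOf_ratio {n : ℤ} (hn : 3 ≤ n) (ho : Odd n) {y : ℤ → ℝ}
    (hper : ∀ i : ℤ, y (i + 2 * n) = y i)
    (hneg : ∀ i ∈ AP 2 (2 * n - 2) 2, y i = -1)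
    (hprod : ∏ i ∈ Finset.Icc (1 : ℤ) (2 * n), y i = 1)
    (h0 : y 0 ≠ -1) (hnz : ∀ i : ℤ, y i ≠ 0) {j C : ℤ} (hC : 2 * C = 3 * (n + 1 + 1) - j)
    (hdvd : n ∣ 2 * 1 + 1 - C) {c c' : ℤ → ℤ → ℤ} (hc : IsCornerSum (n+1) c)
    (hc' : IsCornerSum (n+1) c')
    (h : ∀ u v, 1 ≤ u → u ≤ n + 1 - 1 → 1 ≤ v → v ≤ n + 1 - 1 → c' u v = c u v - 1) :
    termOf y j (n+1) (cornerSet (n+1) c') = termOf y j (n+1) (cornerSet (n+1) c) * y 0 := by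
  have hy : ∀ a b, y (4 * a + 2 * b - 3 * (n + 1 + 1) + j) =
      if n ∣ 2 * a + b - C then y 0 else -1 := by
    intro a b
    rw [← y_even hn hper hneg]
    congr 1
    omega
  have hy0 : ∀ a b, n ∣ 2 * a + b - (2 * 1 + 1) →
      y (4 * a + 2 * b - 3 * (n + 1 + 1) + j) = y 0 := fun a b hab => by
    rw [hy, if_pos (dvd_of_dvd_of_eq (dvd_add hab hdvd) (by ring))]
  have e1 := freeFactor_shift (by omega) hc hc' h (y 0) h0 (j := j)
    (hy0 _ _ (by norm_num)) (hy0 _ _ ⟨3, by ring⟩) (hy0 _ _ ⟨1, by ring⟩) (hy0 _ _ ⟨2, by ring⟩)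
  have e2 := prod_cornerSet_shift (y := y) (j := j) hc hc' h
  have e3 : ∏ a ∈ Finset.Icc 1 (n+1), y (4 * a + 2 * (n + 1) - 3 * (n + 1 + 1) + j) =
      y 0 * y 0 := by
    rw [prod_Icc_succ _ (by omega), hy0 (n+1) (n+1) ⟨3, by ring⟩,
      prod_single (by omega) ho (hy0 1 (n+1) ⟨1, by ring⟩)]
    intro a ha han
    rw [hy, if_neg]
    intro hd
    have hd' : n ∣ 2 * (a - 1) :=
      dvd_of_dvd_of_eq (dvd_sub (dvd_sub hd hdvd) (dvd_refl n)) (by ring)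
    have hd2 : n ∣ a - 1 := by
      refine IsCoprime.dvd_of_dvd_mul_left ?_ hd'
      obtain ⟨q, rfl⟩ := ho
      exact ⟨1, -q, by ring⟩
    have := Int.le_of_dvd (by omega) hd2
    omega
  have e4 : ∏ x ∈ Finset.Icc 1 (n+1) ×ˢ Finset.Icc 1 (n+1),
      y (4 * x.1 + 2 * x.2 - 3 * (n + 1 + 1) + j) = y 0 ^ (n.toNat + 1) * (y 0 * y 0) := by
    rw [Finset.prod_product, ← e3, show n.toNat + 1 = (Finset.Icc 1 (n+1)).card by
      rw [Int.card_Icc]; omega, ← Finset.prod_const, ← Finset.prod_mul_distrib]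
    refine Finset.prod_congr rfl fun a _ => ?_
    rw [prod_Icc_succ _ (by omega)]
    congr 1
    rw [← prod_even hn ho hper hneg (2 * a - C)]
    refine Finset.prod_congr rfl fun b _ => ?_
    congr 1
    dsimp only
    omega
  have e5 : (∏ x ∈ Finset.Icc 1 (n+1-1) ×ˢ Finset.Icc 1 (n+1-1),
      y (4 * x.1 + 2 * x.2 - 3 * (n + 1) + j)) * y 0 ^ n.toNat = 1 := by
    rw [add_sub_cancel_right, Finset.prod_product,
      show n.toNat = (Finset.Icc 1 n).card by rw [Int.card_Icc]; omega, ← Finset.prod_const,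
      ← Finset.prod_mul_distrib]
    refine Finset.prod_eq_one fun a _ => ?_
    rw [← prod_odd hn ho hper hneg hprod (2 * a - C + 2)]
    congr 1
    refine Finset.prod_congr rfl fun b _ => ?_
    congr 1
    dsimp only
    omega
  rw [e4] at e1
  refine mul_right_cancel₀ (mul_ne_zero (hnz 0) (hnz 0)) ?_
  simp only [termOf]
  rw [e2, mul_assoc, e1, pow_succ]
  linear_combination (∏ q ∈ cornerSet (n+1) c, gridWt y j (n+1) q) *
    freeFactor y j (n+1) (cornerSet (n+1) c) * (y 0) ^ 3 * e5

theorem stmt8 (n : ℤ) (hn : 3 ≤ n) (hodd : Odd n) (y : ℤ → ℝ)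
    (hper : ∀ i : ℤ, y (i + 2 * n) = y i)
    (hneg : ∀ i ∈ AP 2 (2 * n - 2) 2, y i = -1)
    (hprod : ∏ i ∈ Finset.Icc (1 : ℤ) (2 * n), y i = 1)
    (h0 : y 0 ≠ -1) (hnz : ∀ i : ℤ, y i ≠ 0) :
    ∀ j k : ℤ, Odd (j + k) → (k = n ∨ k = n + 1) →
      MvPolynomial.aeval y (pentagramF j k) ≠ 0 := by
  intro j k hjk hk
  obtain ⟨C, hC⟩ : ∃ C : ℤ, 2 * C = 3 * (k + 1) - j := by
    obtain ⟨m, hm⟩ := hjk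
    exact ⟨2 * k + 1 - m, by omega⟩
  have hw : ∀ a b, y (4 * a + 2 * b - 3 * (k+1) + j) = -1 ↔ ¬ n ∣ 2 * a + b - C := by
    intro a b
    rw [show 4 * a + 2 * b - 3 * (k+1) + j = 2 * (2 * a + b - C) by omega,
      y_even hn hper hneg]
    split_ifs with h
    · exact ⟨fun e => absurd e h0, fun e => absurd h e⟩
    · exact ⟨fun _ => h, fun _ => rfl⟩
  have hn0 : 0 < n := by omega
  rw [aeval_F_eq]
  change ∑ J ∈ (gridE k).powerset, termOf y j k J ≠ 0
  rcases hk with rfl | rfl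
  · rw [Finset.sum_eq_single_of_mem (cornerSet k (permSum k C)) (cornerSet_mem _ _)]
    · exact termOf_ne_zero (permSum_isCornerSum hn0 hodd C) hnz hw (permSum_isGood hn0 C)
    · intro J hJ hne
      by_contra hJ0
      obtain ⟨c, hc, hg, rfl⟩ := exists_good hnz hw hJ hJ0
      exact hne (cornerSet_congr fun u v => eq_permSum hn0 hc hg u v)
  · have hsurv : ∀ J ∈ (gridE (n+1)).powerset, termOf y j (n+1) J ≠ 0 →
        ∃ a₀, 1 ≤ a₀ ∧ a₀ ≤ n + 1 ∧ colOf n C a₀ = 1 ∧ J = cornerSet (n+1) (bigSum n C a₀) := by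
      intro J hJ hJ0
      obtain ⟨c, hc, hg, rfl⟩ := exists_good hnz hw hJ hJ0
      obtain ⟨a₀, h1, h2, h3, h4⟩ := eq_bigSum (by omega) hodd hc hg
      exact ⟨a₀, h1, h2, h3, cornerSet_congr h4⟩
    have hcol : colOf n C (n+1) = colOf n C 1 := by rw [add_comm, colOf_add]
    have hrow : ∀ a, 1 ≤ a → a ≤ n → colOf n C a = 1 → a = rowOf n C 1 := fun a h1 h2 h3 =>
      ((colOf_eq_iff hn0 hodd h1 h2 le_rfl (by omega)).1 h3).symm
    by_cases h1 : colOf n C 1 = 1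
    · have c1 := bigSum_isCornerSum hn0 hodd (C := C) (a₀ := n+1) (by omega) le_rfl (hcol.trans h1)
      have c2 := bigSum_isCornerSum hn0 hodd (C := C) (a₀ := 1) le_rfl (by omega) h1
      have hshift : ∀ u v, 1 ≤ u → u ≤ n + 1 - 1 → 1 ≤ v → v ≤ n + 1 - 1 →
          bigSum n C 1 u v = bigSum n C (n+1) u v - 1 := by
        intro u v hu hun hv hvn
        rw [bigSum, bigSum, h1, if_pos hu, if_pos hv, if_neg (by omega : ¬ n + 1 ≤ v),
          if_neg (by omega : ¬ n + 1 ≤ u)]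
        ring
      have hdvd : n ∣ 2 * 1 + 1 - C := by
        have := (colOf_spec hn0 C 1).2.2
        rwa [h1] at this
      have hne : cornerSet (n+1) (bigSum n C (n+1)) ≠ cornerSet (n+1) (bigSum n C 1) := by
        intro he
        have b1 := c1.bounds (u := 1) (v := 1) (by omega) (by omega) (by omega) (by omega)
        have b2 := c2.bounds (u := 1) (v := 1) (by omega) (by omega) (by omega) (by omega)
        have hs := hshift 1 1 (by omega) (by omega) (by omega) (by omega)
        have hmem : ((1 : ℤ), (1 : ℤ), (1 : ℤ)) ∈ cornerSet (n+1) (bigSum n C 1) :=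
          Finset.mem_filter.2 ⟨by rw [mem_gridE]; dsimp only; omega, by dsimp only; omega⟩
        rw [← he] at hmem
        have := (Finset.mem_filter.1 hmem).2
        dsimp only at this
        omega
      rw [← Finset.sum_subset (s₁ := {cornerSet (n+1) (bigSum n C (n+1)),
          cornerSet (n+1) (bigSum n C 1)}), Finset.sum_pair hne,
        termOf_ratio hn hodd hper hneg hprod h0 hnz hC hdvd c1 c2 hshift]
      · have ht := termOf_ne_zero c1 hnz hw (bigSum_isGood hn0 (hcol.trans h1))
        have h10 : 1 + y 0 ≠ 0 := fun h => h0 (by linarith)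
        intro hz
        exact mul_ne_zero ht h10 (by linear_combination hz)
      · intro J hJ
        rw [Finset.mem_insert, Finset.mem_singleton] at hJ
        rcases hJ with rfl | rfl <;> exact cornerSet_mem _ _
      · intro J hJ hJ'
        by_contra hJ0
        obtain ⟨a₀, ha1, ha2, ha3, rfl⟩ := hsurv J hJ hJ0
        apply hJ'
        rw [Finset.mem_insert, Finset.mem_singleton]
        rcases (by omega : a₀ = n + 1 ∨ a₀ ≤ n) with rfl | h
        · exact Or.inl rfl
        · rw [hrow a₀ ha1 h ha3, ← hrow 1 le_rfl (by omega) h1]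
          exact Or.inr rfl
    · have hr := rowOf_spec hn0 hodd C 1
      have hr1 : colOf n C (rowOf n C 1) = 1 :=
        (colOf_eq_iff hn0 hodd hr.1 hr.2.1 le_rfl (by omega)).2 rfl
      rw [Finset.sum_eq_single_of_mem (cornerSet (n+1) (bigSum n C (rowOf n C 1)))
        (cornerSet_mem _ _)]
      · exact termOf_ne_zero (bigSum_isCornerSum hn0 hodd hr.1 (by omega) hr1) hnz hw
          (bigSum_isGood hn0 hr1)
      · intro J hJ hne
        by_contra hJ0
        obtain ⟨a₀, ha1, ha2, ha3, rfl⟩ := hsurv J hJ hJ0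
        apply hne
        rcases (by omega : a₀ = n + 1 ∨ a₀ ≤ n) with rfl | h
        · exact absurd (hcol.symm.trans ha3) h1
        · rw [hrow a₀ ha1 h ha3]

end
end

section
/- Fix integers i and m with m ≥ 1, and let S = [2i−2(m−1), 2i+2(m−1)]_4. Then F_{j,k}|_S ≠ 0 for all integers j and k with k ∈ {m+1, m+2} and j+k odd. -/
/-!
Write `idx (r,s,t) = 3r+s+j`, and let `A = 2i-2m-2`, `B = 2i+2m+2` be the two values that extend
the progression `S` by one step on either side.  With `α = k-1+j-B` and `β = A+k-1-j`, put
`I₀ = {(r,s,t) ∈ P_k : t ≤ r+s+α or t ≤ -(r+s)+β}`.  A downward covering step lowers `t` by one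
and changes `r+s` by one, so `I₀` is an order ideal.  The monomial of `I₀` in the variables outside `S` comes
from no other order ideal, so its coefficient in `F_{j,k}|_S` is `±1`.

To see this, let `I` be an ideal with the same monomial.
* `I₀` contains every element with `idx ≤ A` or `idx ≥ B` (`mem_of_outer`); counting the elements
  of a given index, so does `I`.
* Every element of `I₀` lies below such an outer element: keep increasing `s` and `r` alternately
  (or keep decreasing them), which is possible until the outer region is reached (`up_chain`,
  `down_chain`). Hence `I₀ ⊆ I`.
* By counting again, the elements of `I \ I₀` have index in `S`. An element of `I \ I₀` with `t`
  minimal has all its lower covers in `I₀`, and a congruence modulo `4` shows that no element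
  outside `I₀` with index in `S` has this property (`no_free`). Thus `I = I₀`.
-/

open MvPolynomial
open scoped Classical

noncomputable section

namespace Pentagram

/-- The index of the variable attached to an element of `P_k`. -/
def idx (j : ℤ) (p : ℤ × ℤ × ℤ) : ℤ := 3 * p.1 + p.2.1 + j

/-- Membership in the ideal `I₀`, as a condition on an element of `P_k`. -/
def Low (α β : ℤ) (p : ℤ × ℤ × ℤ) : Prop :=
  p.2.2 ≤ p.1 + p.2.1 + α ∨ p.2.2 ≤ -(p.1 + p.2.1) + β

lemma mem_PFinset {k : ℤ} {p : ℤ × ℤ × ℤ} : p ∈ pentagramPFinset k ↔ p ∈ pentagramP k := by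
  obtain ⟨r, s, t⟩ := p
  simp only [pentagramPFinset, Finset.mem_filter, Finset.mem_product, Finset.mem_Icc,
    and_iff_right_iff_imp]
  intro h
  simp only [pentagramP, pentagramQ, Set.mem_union, Set.mem_ofPred_eq, abs_eq_max_neg] at h
  omega

lemma low_of_covers {α β : ℤ} {x y : ℤ × ℤ × ℤ} (h : pentagramCovers x y) (hy : Low α β y) :
    Low α β x := by
  obtain ⟨r, s, t⟩ := x
  obtain ⟨r', s', t'⟩ := y
  simp only [pentagramCovers, Low, abs_eq_max_neg] at *
  omega

lemma ideal_low (k α β : ℤ) : IsPentagramOrderIdeal k {p | p ∈ pentagramP k ∧ Low α β p} := by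
  refine ⟨fun p hp => hp.1, fun x y hy hxy => ?_⟩
  induction hxy using Relation.ReflTransGen.head_induction_on with
  | refl => exact hy
  | head h _ ih => exact ⟨h.1, low_of_covers h.2.2 ih.2⟩

lemma mem_of_covers {k : ℤ} {I : Set (ℤ × ℤ × ℤ)} (hI : IsPentagramOrderIdeal k I)
    {x y : ℤ × ℤ × ℤ} (hx : x ∈ pentagramP k) (hy : y ∈ I) (h : pentagramCovers x y) : x ∈ I :=
  hI.2 x y hy (Relation.ReflTransGen.single ⟨hx, hI.1 hy, h⟩)

/-- Elements whose index is far from `S` belong to `I₀`. -/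
lemma mem_of_outer {j k α β : ℤ} {p : ℤ × ℤ × ℤ} (hp : p ∈ pentagramP k)
    (h : idx j p ≤ β - k + 1 + j ∨ k - 1 - α + j ≤ idx j p) : Low α β p := by
  obtain ⟨r, s, t⟩ := p
  simp only [pentagramP, pentagramQ, Set.mem_union, Set.mem_ofPred_eq, abs_eq_max_neg, Low, idx] at *
  omega

/-- Elements with `t ≤ r+s+α` lie below an element of large index: increase `s` on `Q_k` and `r` on
`Q_{k+1}`. The step is obstructed only at a maximal element of its `(r,s)`-column with `r ≥ 0`,
whose index is already large. -/
lemma up_chain {j k α : ℤ} {I : Set (ℤ × ℤ × ℤ)} (hI : IsPentagramOrderIdeal k I)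
    (hout : ∀ p ∈ pentagramP k, k - 1 - α + j ≤ idx j p → p ∈ I) :
    ∀ (n : ℕ) (r s t : ℤ), k - n ≤ t → (r, s, t) ∈ pentagramP k → t ≤ r + s + α →
      (r, s, t) ∈ I := by
  intro n
  induction n with
  | zero =>
    intro r s t hn hp _
    simp only [pentagramP, pentagramQ, Set.mem_union, Set.mem_ofPred_eq, abs_eq_max_neg] at hp
    omega
  | succ n ih =>
    intro r s t hn hp ht
    by_cases hb : k - 1 - α + j ≤ idx j (r, s, t)
    · exact hout _ hp hb
    rcases id hp with hq | hq
    · have hp' : (r, s + 1, t + 1) ∈ pentagramP k := by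
        right
        simp only [pentagramQ, Set.mem_ofPred_eq, abs_eq_max_neg] at *
        omega
      refine mem_of_covers hI hp (ih r (s + 1) (t + 1) (by omega) hp' (by omega)) ⟨rfl, ?_⟩
      simp
    · have hp' : (r + 1, s, t + 1) ∈ pentagramP k := by
        left
        simp only [pentagramQ, Set.mem_ofPred_eq, abs_eq_max_neg, idx] at *
        omega
      refine mem_of_covers hI hp (ih (r + 1) s (t + 1) (by omega) hp' (by omega)) ⟨rfl, ?_⟩
      simp

/-- The mirror image of `up_chain`: decrease `s` on `Q_k` and `r` on `Q_{k+1}`. -/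
lemma down_chain {j k β : ℤ} {I : Set (ℤ × ℤ × ℤ)} (hI : IsPentagramOrderIdeal k I)
    (hout : ∀ p ∈ pentagramP k, idx j p ≤ β - k + 1 + j → p ∈ I) :
    ∀ (n : ℕ) (r s t : ℤ), k - n ≤ t → (r, s, t) ∈ pentagramP k → t ≤ -(r + s) + β →
      (r, s, t) ∈ I := by
  intro n
  induction n with
  | zero =>
    intro r s t hn hp _
    simp only [pentagramP, pentagramQ, Set.mem_union, Set.mem_ofPred_eq, abs_eq_max_neg] at hp
    omega
  | succ n ih =>
    intro r s t hn hp ht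
    by_cases hb : idx j (r, s, t) ≤ β - k + 1 + j
    · exact hout _ hp hb
    rcases id hp with hq | hq
    · have hp' : (r, s - 1, t + 1) ∈ pentagramP k := by
        right
        simp only [pentagramQ, Set.mem_ofPred_eq, abs_eq_max_neg] at *
        omega
      refine mem_of_covers hI hp (ih r (s - 1) (t + 1) (by omega) hp' (by omega)) ⟨rfl, ?_⟩
      simp
    · have hp' : (r - 1, s, t + 1) ∈ pentagramP k := by
        left
        simp only [pentagramQ, Set.mem_ofPred_eq, abs_eq_max_neg, idx] at *
        omega
      refine mem_of_covers hI hp (ih (r - 1) s (t + 1) (by omega) hp' (by omega)) ⟨rfl, ?_⟩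
      simp

/-- An element outside `I₀` with index in `S` has a lower cover in `P_k` outside `I₀`. -/
lemma no_free {i m j k : ℤ} (hk : k = m + 1 ∨ k = m + 2) (hodd : Odd (j + k))
    {α β : ℤ} (hα : α = k + j - 2 * i - 2 * m - 3) (hβ : β = 2 * i - 2 * m - 3 + k - j)
    {x : ℤ × ℤ × ℤ} (hx : x ∈ pentagramP k) (hlow : ¬ Low α β x)
    (hS : idx j x ∈ AP (2 * i - 2 * (m - 1)) (2 * i + 2 * (m - 1)) 4)
    (hcov : ∀ z ∈ pentagramP k, pentagramCovers z x → Low α β z) : False := by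
  obtain ⟨r, s, t⟩ := x
  obtain ⟨w, hw⟩ := hodd
  -- The lower covers of an element of `Q_{k+1}` are `(r, s ± 1, t - 1)`.
  have hplus : (r, s + 1, t - 1) ∈ pentagramQ k → t ≤ r + s + α + 2 := by
    intro h
    have := hcov _ (Or.inl h) ⟨by simp, by simp⟩
    simp only [Low] at this hlow
    omega
  have hminus : (r, s - 1, t - 1) ∈ pentagramQ k → t ≤ -(r + s) + β + 2 := by
    intro h
    have := hcov _ (Or.inl h) ⟨by simp, by simp⟩
    simp only [Low] at this hlow
    omega
  have hxq : (r, s, t) ∈ pentagramQ (k + 1) := by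
    rcases hx with h | h
    · simp only [pentagramQ, Set.mem_ofPred_eq, AP, idx] at h hS
      omega
    · exact h
  clear hx hcov
  simp only [pentagramQ, Set.mem_ofPred_eq, Low, AP, idx] at *
  obtain ⟨h1, h2, h3, h4, h5⟩ := hxq
  obtain ⟨-, -, hS⟩ := hS
  rw [not_or] at hlow
  obtain ⟨l1, l2⟩ := hlow
  by_cases hmin : t = 2 * |s| - k + 1
  · -- A minimal element of its column keeps only the lower cover towards `s = 0`.
    rcases lt_trichotomy s 0 with hs | hs | hs
    · have := hplus (by simp only [abs_eq_max_neg] at *; omega)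
      simp only [abs_eq_max_neg] at *
      omega
    · subst hs
      simp only [abs_zero] at *
      omega
    · have := hminus (by simp only [abs_eq_max_neg] at *; omega)
      simp only [abs_eq_max_neg] at *
      omega
  · have a1 := hplus (by simp only [abs_eq_max_neg] at *; omega)
    have a2 := hminus (by simp only [abs_eq_max_neg] at *; omega)
    simp only [abs_eq_max_neg] at *
    omega

/-- The exponent of the monomial of `I` in the variables outside `S`. -/
def expo (S : Set ℤ) (j : ℤ) (I : Finset (ℤ × ℤ × ℤ)) : ℤ →₀ ℕ :=
  ∑ p ∈ I, if idx j p ∈ S then 0 else Finsupp.single (idx j p) 1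

/-- The sign acquired by the monomial of `I` when the variables in `S` are set to `-1`. -/
def sgn (S : Set ℤ) (j : ℤ) (I : Finset (ℤ × ℤ × ℤ)) : ℤ :=
  ∏ p ∈ I, if idx j p ∈ S then -1 else 1

lemma sgn_ne_zero (S : Set ℤ) (j : ℤ) (I : Finset (ℤ × ℤ × ℤ)) : sgn S j I ≠ 0 := by
  refine Finset.prod_ne_zero_iff.mpr fun p _ => ?_
  split_ifs <;> norm_num

lemma substNeg_prod (S : Set ℤ) (j : ℤ) (I : Finset (ℤ × ℤ × ℤ)) :
    substNeg S (∏ p ∈ I, X (3 * p.1 + p.2.1 + j)) = monomial (expo S j I) (sgn S j I) := by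
  rw [map_prod, expo, sgn]
  induction I using Finset.induction_on with
  | empty => simp
  | insert a I ha ih =>
    rw [Finset.prod_insert ha, Finset.prod_insert ha, Finset.sum_insert ha, ih,
      ← monomial_mul]
    congr 1
    change substNeg S (X (idx j a)) = _
    simp only [substNeg, AlgHom.toRingHom_eq_coe, RingHom.coe_coe, aeval_X]
    by_cases h : idx j a ∈ S
    · rw [if_pos h, if_pos h, if_pos h, monomial_zero', C_neg, C_1]
    · rw [if_neg h, if_neg h, if_neg h]
      rfl

lemma expo_apply (S : Set ℤ) (j : ℤ) (I : Finset (ℤ × ℤ × ℤ)) {n : ℤ} (hn : n ∉ S) :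
    expo S j I n = (I.filter (fun p => idx j p = n)).card := by
  rw [expo, Finsupp.finsetSum_apply, Finset.card_filter]
  refine Finset.sum_congr rfl fun p _ => ?_
  by_cases h : idx j p = n
  · simp [h, hn]
  · split_ifs <;> simp [h]

/-- If `I` and `K` have equal exponents and, for some `n ∉ S`, the elements of `I` of index `n` all
lie in `K`, then the converse inclusion holds for the elements of index `n`. -/
lemma mem_of_expo_eq {S : Set ℤ} {j : ℤ} {I K : Finset (ℤ × ℤ × ℤ)} {n : ℤ} (hn : n ∉ S)
    (hsub : ∀ p ∈ I, idx j p = n → p ∈ K) (he : expo S j I = expo S j K) :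
    ∀ p ∈ K, idx j p = n → p ∈ I := by
  intro p hp hpn
  have hc : (I.filter (fun p => idx j p = n)).card = (K.filter (fun p => idx j p = n)).card := by
    rw [← expo_apply S j I hn, ← expo_apply S j K hn, he]
  have hss : I.filter (fun p => idx j p = n) ⊆ K.filter (fun p => idx j p = n) := by
    intro q hq
    rw [Finset.mem_filter] at hq ⊢
    exact ⟨hsub q hq.1 hq.2, hq.2⟩
  have := Finset.eq_of_subset_of_card_le hss hc.ge
  have hpK : p ∈ K.filter (fun p => idx j p = n) := Finset.mem_filter.mpr ⟨hp, hpn⟩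
  rw [← this] at hpK
  exact (Finset.mem_filter.mp hpK).1

/-- The order ideal `I₀` as a finite set. -/
def I0 (k α β : ℤ) : Finset (ℤ × ℤ × ℤ) := (pentagramPFinset k).filter (Low α β)

lemma mem_I0 {k α β : ℤ} {p : ℤ × ℤ × ℤ} : p ∈ I0 k α β ↔ p ∈ pentagramP k ∧ Low α β p := by
  rw [I0, Finset.mem_filter, mem_PFinset]

/-- `I₀` is the only order ideal with its monomial in the variables outside `S`. -/
lemma eq_I0 {i m j k : ℤ} (hk : k = m + 1 ∨ k = m + 2) (hodd : Odd (j + k))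
    {α β : ℤ} (hα : α = k + j - 2 * i - 2 * m - 3) (hβ : β = 2 * i - 2 * m - 3 + k - j)
    {I : Finset (ℤ × ℤ × ℤ)} (hI : IsPentagramOrderIdeal k (↑I : Set (ℤ × ℤ × ℤ)))
    (he : expo (AP (2 * i - 2 * (m - 1)) (2 * i + 2 * (m - 1)) 4) j I =
      expo (AP (2 * i - 2 * (m - 1)) (2 * i + 2 * (m - 1)) 4) j (I0 k α β)) :
    I = I0 k α β := by
  have hout : ∀ p ∈ pentagramP k,
      (idx j p ≤ β - k + 1 + j ∨ k - 1 - α + j ≤ idx j p) → p ∈ I := by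
    intro p hp h
    refine mem_of_expo_eq (n := idx j p) ?_ ?_ he p (mem_I0.mpr ⟨hp, mem_of_outer hp h⟩) rfl
    · rintro ⟨h1, h2, -⟩
      omega
    · intro q hq hqn
      exact mem_I0.mpr ⟨hI.1 hq, mem_of_outer (hI.1 hq) (hqn ▸ h)⟩
  have hsub : I0 k α β ⊆ I := by
    rintro ⟨r, s, t⟩ hp
    obtain ⟨hp, h | h⟩ := mem_I0.mp hp
    · exact up_chain hI (fun p hp h => hout p hp (Or.inr h)) (k - t).toNat r s t (by omega) hp h
    · exact down_chain hI (fun p hp h => hout p hp (Or.inl h)) (k - t).toNat r s t (by omega) hp h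
  refine Finset.Subset.antisymm ?_ hsub
  by_contra hne
  obtain ⟨x, hx, hxmin⟩ := (I \ I0 k α β).exists_min_image (fun p => p.2.2)
    (Finset.sdiff_nonempty.mpr hne)
  rw [Finset.mem_sdiff] at hx
  have hxP : x ∈ pentagramP k := hI.1 hx.1
  refine no_free hk hodd hα hβ hxP (fun h => hx.2 (mem_I0.mpr ⟨hxP, h⟩)) ?_ ?_
  · by_contra hS
    exact hx.2 (mem_of_expo_eq hS (fun q hq _ => hsub hq) he.symm x hx.1 rfl)
  · intro z hz hzx
    have hzI : z ∈ I := mem_of_covers hI hz hx.1 hzx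
    by_contra hlow
    have := hxmin z (Finset.mem_sdiff.mpr ⟨hzI, fun h => hlow (mem_I0.mp h).2⟩)
    have h1 := hzx.1
    omega

end Pentagram

open Pentagram in
theorem stmt10 (i m : ℤ) (hm : 1 ≤ m) :
    ∀ j k : ℤ, (k = m + 1 ∨ k = m + 2) → Odd (j + k) →
      substNeg (AP (2 * i - 2 * (m - 1)) (2 * i + 2 * (m - 1)) 4) (pentagramF j k) ≠ 0 := by
  intro j k hk hodd h0
  obtain ⟨α, hα⟩ : ∃ α, α = k + j - 2 * i - 2 * m - 3 := ⟨_, rfl⟩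
  obtain ⟨β, hβ⟩ : ∃ β, β = 2 * i - 2 * m - 3 + k - j := ⟨_, rfl⟩
  have hmem : I0 k α β ∈ (pentagramPFinset k).powerset.filter
      (fun I : Finset (ℤ × ℤ × ℤ) => IsPentagramOrderIdeal k (↑I : Set (ℤ × ℤ × ℤ))) := by
    refine Finset.mem_filter.mpr ⟨Finset.mem_powerset.mpr (Finset.filter_subset _ _), ?_⟩
    convert ideal_low k α β using 1
    ext p
    exact mem_I0
  refine sgn_ne_zero (AP (2 * i - 2 * (m - 1)) (2 * i + 2 * (m - 1)) 4) j (I0 k α β) ?_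
  have hc := congrArg
    (coeff (expo (AP (2 * i - 2 * (m - 1)) (2 * i + 2 * (m - 1)) 4) j (I0 k α β))) h0
  rw [pentagramF, map_sum, coeff_sum, Finset.sum_eq_single_of_mem _ hmem, substNeg_prod,
    coeff_monomial, if_pos rfl, coeff_zero] at hc
  · exact hc
  · intro I hI hne
    rw [substNeg_prod, coeff_monomial, if_neg]
    exact fun he => hne (eq_I0 hk hodd hα hβ (Finset.mem_filter.mp hI).2 he)

end
end
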